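/- arXiv:1609.00973 — 4 statements merged into one kernel-verified Lean document; each statement's English description precedes it below -/
import Mathlib

section
/- If Λ is a Λ-sequence and f : [0,1] → ℝ is of bounded Λ-variation (such a function is bounded, Borel measurable and hence Lebesgue-integrable), then V_Λ(K_nf) ≤ V_Λ(f) for every n ∈ ℕ (the Kantorovich polynomials diminish the Λ-variation). -/
open Filter Set MeasureTheory
open scoped ENNReal Topology

/-- `l` is a Λ-sequence (indexed from 0, so `l 0` plays the role of `λ₁`):
a nondecreasing sequence of positive reals whose reciprocals have divergent sum. -/
def IsLambdaSeq (l : ℕ → ℝ) : Prop :=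
  Monotone l ∧ (∀ n, 0 < l n) ∧ ¬ Summable (fun n => 1 / l n)

/-- A proper Λ-sequence: additionally `λₙ → ∞`. -/
def IsProperLambdaSeq (l : ℕ → ℝ) : Prop :=
  IsLambdaSeq l ∧ Tendsto l atTop atTop

/-- The Λ-variation of `f` computed over partition points taken from `K`:
the supremum of `∑ⱼ |f(x_{j+1}) - f(x_j)| / λ_{β(j)}` over all `m`, all nondecreasing
tuples `x₁ ≤ … ≤ x_{m+1}` of points of `K` and all permutations `β` of the gaps. -/
noncomputable def lamVarOn (l : ℕ → ℝ) (f : ℝ → ℝ) (K : Set ℝ) : ℝ≥0∞ :=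
  ⨆ (m : ℕ) (x : Fin (m + 1) → ℝ) (_ : Monotone x) (_ : ∀ j, x j ∈ K)
    (β : Equiv.Perm (Fin m)),
    ∑ j : Fin m, ENNReal.ofReal (|f (x j.succ) - f (x j.castSucc)| / l (β j))

/-- The Λ-variation of `f : [0,1] → ℝ`. -/
noncomputable def lamVar (l : ℕ → ℝ) (f : ℝ → ℝ) : ℝ≥0∞ :=
  lamVarOn l f (Set.Icc 0 1)

/-- The norm `‖f‖_Λ = V_Λ(f) + |f 0|` (valued in `[0,∞]`). -/
noncomputable def lamNorm (l : ℕ → ℝ) (f : ℝ → ℝ) : ℝ≥0∞ :=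
  lamVar l f + ENNReal.ofReal |f 0|

/-- `f` is continuous in Λ-variation: `V_{Λ_(m)}(f) → 0` as `m → ∞`. -/
def ContInLamVar (l : ℕ → ℝ) (f : ℝ → ℝ) : Prop :=
  Tendsto (fun m => lamVar (fun n => l (n + m)) f) atTop (𝓝 0)

/-- The restricted Λ-variation `V_{Λ,δ}(f)`: the supremum of `∑ⱼ |f(bⱼ) - f(aⱼ)| / λⱼ`
over all finite sequences of nonoverlapping closed subintervals `[aⱼ, bⱼ]` of `[0,1]`
of length at most `δ`, listed in any order. -/
noncomputable def lamVarDelta (l : ℕ → ℝ) (δ : ℝ) (f : ℝ → ℝ) : ℝ≥0∞ :=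
  ⨆ (k : ℕ) (a : Fin k → ℝ) (b : Fin k → ℝ)
    (_ : ∀ j, 0 ≤ a j ∧ a j ≤ b j ∧ b j ≤ 1 ∧ b j - a j ≤ δ)
    (_ : ∀ i j, i ≠ j → b i ≤ a j ∨ b j ≤ a i),
    ∑ j : Fin k, ENNReal.ofReal (|f (b j) - f (a j)| / l j)

/-- The `n`-th Bernstein polynomial of `f : [0,1] → ℝ`. -/
noncomputable def bern (n : ℕ) (f : ℝ → ℝ) (x : ℝ) : ℝ :=
  ∑ k ∈ Finset.range (n + 1),
    f ((k : ℝ) / n) * (n.choose k : ℝ) * x ^ k * (1 - x) ^ (n - k)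

/-- The `n`-th Kantorovich polynomial of `f : [0,1] → ℝ`. -/
noncomputable def kant (n : ℕ) (f : ℝ → ℝ) (x : ℝ) : ℝ :=
  ∑ k ∈ Finset.range (n + 1),
    (n.choose k : ℝ) * x ^ k * (1 - x) ^ (n - k) *
      ((n + 1) * ∫ t in ((k : ℝ) / (n + 1))..(((k : ℝ) + 1) / (n + 1)), f t)

/-- Bernstein-type sum with arbitrary coefficients. -/
noncomputable def kBern (n : ℕ) (g : ℕ → ℝ) (x : ℝ) : ℝ :=
  ∑ k ∈ Finset.range (n + 1), (n.choose k : ℝ) * x ^ k * (1 - x) ^ (n - k) * g k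

lemma kBern_zero (g : ℕ → ℝ) (x : ℝ) : kBern 0 g x = g 0 := by
  simp [kBern]

lemma kBern_succ (n : ℕ) (g : ℕ → ℝ) (x : ℝ) :
    kBern (n + 1) g x = x * kBern n (fun i => g (i + 1)) x + (1 - x) * kBern n g x := by
  have h : ∀ (n : ℕ) (g : ℕ → ℝ), kBern n g x = ∑ ij ∈ Finset.HasAntidiagonal.antidiagonal n,
      (n.choose ij.1 : ℝ) * (x ^ ij.1 * (1 - x) ^ ij.2 * g ij.1) := by
    intro n g
    rw [Finset.Nat.sum_antidiagonal_eq_sum_range_succ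
      (fun i j => (n.choose i : ℝ) * (x ^ i * (1 - x) ^ j * g i))]
    unfold kBern
    exact Finset.sum_congr rfl fun k _ => by ring
  rw [h (n + 1), h n, h n,
    Finset.sum_antidiagonal_choose_succ_mul (fun i j => x ^ i * (1 - x) ^ j * g i),
    add_comm, Finset.mul_sum, Finset.mul_sum]
  congr 1
  · refine Finset.sum_congr rfl fun ij hij => ?_
    have : n.choose ij.2 = n.choose ij.1 := by
      rw [Finset.HasAntidiagonal.mem_antidiagonal] at hij
      exact (Nat.choose_symm_of_eq_add hij.symm).symm
    rw [this]; ring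
  · exact Finset.sum_congr rfl fun k _ => by ring

lemma avg_bound {m : ℕ} (w : Fin m → ℝ) (hw : ∀ j, 0 ≤ w j) (V : ℝ) (F : Fin m → ℝ → ℝ)
    (hF : ∀ j, IntervalIntegrable (F j) volume 0 1)
    (h : ∀ u ∈ Icc (0 : ℝ) 1, ∑ j, w j * |F j u| ≤ V) :
    ∑ j, w j * |∫ u in (0 : ℝ)..1, F j u| ≤ V := by
  have hi : ∀ j ∈ Finset.univ, IntervalIntegrable (fun u => w j * |F j u|) volume 0 1 :=
    fun j _ => (hF j).abs.const_mul _
  calc ∑ j, w j * |∫ u in (0 : ℝ)..1, F j u|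
      ≤ ∑ j, ∫ u in (0 : ℝ)..1, w j * |F j u| := by
        refine Finset.sum_le_sum fun j _ => ?_
        rw [intervalIntegral.integral_const_mul]
        exact mul_le_mul_of_nonneg_left
          (intervalIntegral.abs_integral_le_integral_abs zero_le_one) (hw j)
    _ = ∫ u in (0 : ℝ)..1, ∑ j, w j * |F j u| := by
        rw [intervalIntegral.integral_finsetSum hi]
    _ ≤ ∫ u in (0 : ℝ)..1, V := by
        refine intervalIntegral.integral_mono_on zero_le_one ?_ (by simp) h
        have := IntervalIntegrable.sum Finset.univ hi
        have he : (fun u => ∑ j, w j * |F j u|) = ∑ j, fun u => w j * |F j u| := by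
          ext u; simp
        rw [he]; exact this
    _ = V := by simp

lemma ite_intervalIntegrable (x a b p q : ℝ) :
    IntervalIntegrable (fun u : ℝ => if u ≤ x then a else b) volume p q := by
  have hm : Measurable (fun u : ℝ => if u ≤ x then a else b) :=
    Measurable.ite measurableSet_Iic measurable_const measurable_const
  rw [intervalIntegrable_iff]
  refine Measure.integrableOn_of_bounded (M := max |a| |b|) (by simp) hm.aestronglyMeasurable ?_
  refine Eventually.of_forall fun u => ?_
  split_ifs <;> simp

lemma ite_integral (x a b : ℝ) (hx : x ∈ Icc (0 : ℝ) 1) :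
    ∫ u in (0 : ℝ)..1, (if u ≤ x then a else b) = x * a + (1 - x) * b := by
  rw [← intervalIntegral.integral_add_adjacent_intervals (b := x)
    (ite_intervalIntegrable _ _ _ _ _) (ite_intervalIntegrable _ _ _ _ _)]
  have h1 : ∫ u in (0 : ℝ)..x, (if u ≤ x then a else b) = ∫ u in (0 : ℝ)..x, a := by
    refine intervalIntegral.integral_congr_ae (Eventually.of_forall fun u hu => ?_)
    rw [uIoc_of_le hx.1] at hu
    simp [hu.2]
  have h2 : ∫ u in x..1, (if u ≤ x then a else b) = ∫ u in x..1, b := by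
    refine intervalIntegral.integral_congr_ae (Eventually.of_forall fun u hu => ?_)
    rw [uIoc_of_le hx.2] at hu
    simp [hu.1]
  rw [h1, h2]; simp

lemma core_bound {m : ℕ} (w : Fin m → ℝ) (hw : ∀ j, 0 ≤ w j) (V : ℝ) (x : Fin (m + 1) → ℝ)
    (hx : Monotone x) (hx01 : ∀ j, x j ∈ Icc (0 : ℝ) 1) (N : ℕ) (g : ℕ → ℝ)
    (hg : ∀ k : Fin (m + 1) → ℕ, Monotone k → (∀ j, k j ≤ N) →
      ∑ j : Fin m, w j * |g (k j.succ) - g (k j.castSucc)| ≤ V) (n : ℕ) :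
    ∀ k : Fin (m + 1) → ℕ, Monotone k → (∀ j, k j + n ≤ N) →
      ∑ j : Fin m, w j * |kBern n (fun i => g (i + k j.succ)) (x j.succ)
        - kBern n (fun i => g (i + k j.castSucc)) (x j.castSucc)| ≤ V := by
  induction n with
  | zero =>
    intro k hk hkN
    simpa [kBern_zero] using hg k hk (by simpa using hkN)
  | succ n ih =>
    intro k hk hkN
    have key : ∀ j, kBern (n + 1) (fun i => g (i + k j)) (x j) =
        ∫ u in (0 : ℝ)..1, (if u ≤ x j then kBern n (fun i => g (i + (k j + 1))) (x j)
          else kBern n (fun i => g (i + k j)) (x j)) := by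
      intro j
      rw [ite_integral _ _ _ (hx01 j), kBern_succ]
      simp only [add_assoc, add_comm, add_left_comm]
    simp_rw [key, ← intervalIntegral.integral_sub (ite_intervalIntegrable _ _ _ _ _)
      (ite_intervalIntegrable _ _ _ _ _)]
    refine avg_bound w hw V _ (fun j => (ite_intervalIntegrable _ _ _ _ _).sub
      (ite_intervalIntegrable _ _ _ _ _)) fun u _ => ?_
    have hmono : Monotone (fun j => if u ≤ x j then k j + 1 else k j) := by
      intro i j hij
      have h1 := hk hij
      have h2 := hx hij
      dsimp only
      split_ifs with h3 h4
      · omega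
      · exact absurd (h3.trans h2) h4
      · omega
      · omega
    have := ih _ hmono (fun j => by
      have := hkN j
      split_ifs <;> omega)
    convert this using 6
    · split_ifs <;> rfl
    · split_ifs <;> rfl

lemma lamVar_real (l : ℕ → ℝ) (hl : IsLambdaSeq l) (f : ℝ → ℝ) (hf : lamVar l f < ⊤)
    {m : ℕ} (x : Fin (m + 1) → ℝ) (hx : Monotone x) (hx01 : ∀ j, x j ∈ Icc (0 : ℝ) 1)
    (β : Equiv.Perm (Fin m)) :
    ∑ j : Fin m, (1 / l (β j)) * |f (x j.succ) - f (x j.castSucc)| ≤ (lamVar l f).toReal := by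
  have h : ∑ j : Fin m, ENNReal.ofReal (|f (x j.succ) - f (x j.castSucc)| / l (β j))
      ≤ lamVar l f := by
    unfold lamVar lamVarOn
    exact le_iSup_of_le m <| le_iSup_of_le x <| le_iSup_of_le hx <| le_iSup_of_le hx01 <|
      le_iSup_of_le β le_rfl
  rw [← ENNReal.ofReal_sum_of_nonneg
    (fun j _ => div_nonneg (abs_nonneg _) (hl.2.1 _).le)] at h
  have := (ENNReal.ofReal_le_iff_le_toReal hf.ne).1 h
  refine le_trans (le_of_eq ?_) this
  exact Finset.sum_congr rfl fun j _ => by ring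

lemma lamVar_seq (l : ℕ → ℝ) (hl : IsLambdaSeq l) (f : ℝ → ℝ) (hf : lamVar l f < ⊤)
    (m : ℕ) (z : ℕ → ℝ) (hz : ∀ j < m, z j ≤ z (j + 1)) (hz01 : ∀ j ≤ m, z j ∈ Icc (0 : ℝ) 1) :
    ∑ j ∈ Finset.range m, (1 / l j) * |f (z (j + 1)) - f (z j)| ≤ (lamVar l f).toReal := by
  have := lamVar_real l hl f hf (m := m) (fun j => z j)
    (Fin.monotone_iff_le_succ.2 fun j => by simpa using hz j j.2)
    (fun j => hz01 j (by omega)) (Equiv.refl _)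
  rw [Finset.sum_range]
  simpa using this

lemma lamVar_bdd (l : ℕ → ℝ) (hl : IsLambdaSeq l) (f : ℝ → ℝ) (hf : lamVar l f < ⊤) :
    ∃ M, ∀ x ∈ Icc (0 : ℝ) 1, ‖f x‖ ≤ M := by
  refine ⟨l 0 * (lamVar l f).toReal + |f 0|, fun x hx => ?_⟩
  have := lamVar_seq l hl f hf 1 (fun j => if j = 0 then 0 else x)
    (by intro j hj; interval_cases j; simpa using hx.1)
    (by intro j hj; split_ifs; · simp
        · exact hx)
  have h0 := hl.2.1 0
  simp at this
  rw [inv_mul_le_iff₀ h0] at this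
  rw [Real.norm_eq_abs]
  have h2 := abs_sub_abs_le_abs_sub (f x) (f 0)
  linarith

/-- points of large oscillation -/
def bigOsc (f : ℝ → ℝ) (ε : ℝ) : Set ℝ :=
  {x | x ∈ Ioo (0 : ℝ) 1 ∧ ∀ δ > 0, ∃ y ∈ Icc (0 : ℝ) 1, |y - x| < δ ∧ ε ≤ |f y - f x|}

lemma bigOsc_finite (l : ℕ → ℝ) (hl : IsLambdaSeq l) (f : ℝ → ℝ) (hf : lamVar l f < ⊤)
    (ε : ℝ) (hε : 0 < ε) : (bigOsc f ε).Finite := by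
  by_contra hinf
  have hnn : ∀ n, 0 ≤ 1 / l n := fun n => (one_div_pos.2 (hl.2.1 n)).le
  have htend := (not_summable_iff_tendsto_nat_atTop_of_nonneg hnn).1 hl.2.2
  obtain ⟨M, hM⟩ := ((htend.comp (tendsto_add_atTop_nat 0)).eventually_gt_atTop
    (2 / ε * (lamVar l f).toReal)).exists_forall_of_atTop
  obtain ⟨t, ht, hcard⟩ := Set.Infinite.exists_subset_card_eq hinf (M + 1)
  let p := t.orderEmbOfFin hcard
  have hp : ∀ i, p i ∈ bigOsc f ε := fun i => ht (Finset.orderEmbOfFin_mem t hcard i)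
  have hδ : ∃ δ > 0, ∀ i j, i < j → δ < (p j - p i) / 2 := by
    have h1 : ∀ᶠ δ in 𝓝[>] (0 : ℝ), ∀ i j, i < j → δ < (p j - p i) / 2 := by
      refine eventually_all.2 fun i => eventually_all.2 fun j => ?_
      by_cases hij : i < j
      · have : 0 < (p j - p i) / 2 := by
          have := p.strictMono hij
          linarith
        filter_upwards [mem_nhdsWithin_of_mem_nhds (Iio_mem_nhds this)] with δ hδ _
        exact hδ
      · exact Eventually.of_forall fun δ h => absurd h hij
    obtain ⟨δ, h2, h3⟩ := (h1.and self_mem_nhdsWithin).exists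
    exact ⟨δ, h3, h2⟩
  obtain ⟨δ, hδ0, hδ⟩ := hδ
  choose y hy01 hyd hyf using fun i => (hp i).2 δ hδ0
  let P : ℕ → ℝ := fun i => if h : i < M + 1 then p ⟨i, h⟩ else 0
  let Y : ℕ → ℝ := fun i => if h : i < M + 1 then y ⟨i, h⟩ else 0
  have hP01 : ∀ i < M + 1, P i ∈ Icc (0 : ℝ) 1 := fun i hi => by
    simp only [P, hi, dite_true]; exact Ioo_subset_Icc_self (hp _).1
  have hY01 : ∀ i < M + 1, Y i ∈ Icc (0 : ℝ) 1 := fun i hi => by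
    simp only [Y, hi, dite_true]; exact hy01 _
  have hYP : ∀ i < M + 1, |Y i - P i| < δ := fun i hi => by
    simp only [Y, P, hi, dite_true]; exact hyd _
  have hfYP : ∀ i < M + 1, ε ≤ |f (Y i) - f (P i)| := fun i hi => by
    simp only [Y, P, hi, dite_true]; exact hyf _
  have hPP : ∀ i, i + 1 < M + 1 → δ < (P (i + 1) - P i) / 2 := fun i hi => by
    have hi' : i < M + 1 := by omega
    simp only [P, hi, hi', dite_true]
    exact hδ _ _ (by simp [Fin.lt_def])
  let z : ℕ → ℝ := fun k => if k % 2 = 0 then min (P (k / 2)) (Y (k / 2))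
    else max (P (k / 2)) (Y (k / 2))
  have hz0 : ∀ i, z (2 * i) = min (P i) (Y i) := fun i => by simp [z]
  have hz1 : ∀ i, z (2 * i + 1) = max (P i) (Y i) := fun i => by
    have h1 : (2 * i + 1) % 2 = 1 := by omega
    have h2 : (2 * i + 1) / 2 = i := by omega
    simp [z, h1, h2]
  have hV := lamVar_seq l hl f hf (2 * M + 1) z (by
    intro j hj
    rcases Nat.even_or_odd' j with ⟨i, rfl | rfl⟩
    · rw [hz0, hz1]; exact min_le_max
    · rw [hz1, show 2 * i + 1 + 1 = 2 * (i + 1) by ring, hz0]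
      have a := abs_lt.1 (hYP i (by omega))
      have b := abs_lt.1 (hYP (i + 1) (by omega))
      have c := hPP i (by omega)
      refine max_le (le_min ?_ ?_) (le_min ?_ ?_) <;> linarith [a.1, a.2, b.1, b.2]) (by
    intro j hj
    have h1 := hP01 (j / 2) (by omega)
    have h2 := hY01 (j / 2) (by omega)
    dsimp only [z]
    split_ifs
    · exact ⟨le_min h1.1 h2.1, (min_le_left _ _).trans h1.2⟩
    · exact ⟨h1.1.trans (le_max_left _ _), max_le h1.2 h2.2⟩)
  have hterm : ∀ i < M + 1, ε / 2 * (1 / l (2 * i) + 1 / l (2 * i + 1)) ≤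
      1 / l (2 * i) * |f (z (2 * i + 1)) - f (z (2 * i))| := by
    intro i hi
    have h1 : ε ≤ |f (z (2 * i + 1)) - f (z (2 * i))| := by
      rw [hz0, hz1]
      rcases le_total (P i) (Y i) with h | h
      · rw [max_eq_right h, min_eq_left h]; exact hfYP i hi
      · rw [max_eq_left h, min_eq_right h, abs_sub_comm]; exact hfYP i hi
    have h2 : 1 / l (2 * i + 1) ≤ 1 / l (2 * i) :=
      one_div_le_one_div_of_le (hl.2.1 _) (hl.1 (by omega))
    have h3 := mul_le_mul_of_nonneg_left h1 (hnn (2 * i))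
    nlinarith
  have hsum : ∀ i < M + 1, ε / 2 * ∑ j ∈ Finset.range (2 * i + 2), 1 / l j ≤
      ∑ j ∈ Finset.range (2 * i + 1), 1 / l j * |f (z (j + 1)) - f (z j)| := by
    intro i
    induction i with
    | zero =>
      intro hi
      have := hterm 0 hi
      simpa [Finset.sum_range_succ] using this
    | succ i ih =>
      intro hi
      have h1 := ih (by omega)
      have h2 := hterm (i + 1) hi
      have h3 : 0 ≤ 1 / l (2 * i + 1) * |f (z (2 * i + 1 + 1)) - f (z (2 * i + 1))| :=
        mul_nonneg (hnn _) (abs_nonneg _)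
      have e1 : ∀ F : ℕ → ℝ, ∑ j ∈ Finset.range (2 * (i + 1) + 2), F j =
          ∑ j ∈ Finset.range (2 * i + 2), F j + F (2 * (i + 1)) + F (2 * (i + 1) + 1) := by
        intro F
        rw [Finset.sum_range_succ, Finset.sum_range_succ]
        rfl
      have e2 : ∀ F : ℕ → ℝ, ∑ j ∈ Finset.range (2 * (i + 1) + 1), F j =
          ∑ j ∈ Finset.range (2 * i + 1), F j + F (2 * i + 1) + F (2 * (i + 1)) := by
        intro F
        rw [Finset.sum_range_succ, show 2 * (i + 1) = 2 * i + 1 + 1 by ring,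
          Finset.sum_range_succ]
      rw [e1, e2]
      linarith
  have h1 := (hsum M (by omega)).trans hV
  have h2 := hM (2 * M + 2) (by omega)
  simp only [Function.comp, add_zero] at h2
  have h3 : ε / 2 * (2 / ε * (lamVar l f).toReal) = (lamVar l f).toReal := by
    field_simp
  have h4 := mul_lt_mul_of_pos_left h2 (half_pos hε)
  linarith

lemma lamVar_integrableOn (l : ℕ → ℝ) (hl : IsLambdaSeq l) (f : ℝ → ℝ) (hf : lamVar l f < ⊤) :
    IntegrableOn f (Icc 0 1) := by
  let D : Set ℝ := ⋃ k : ℕ, bigOsc f (1 / ((k : ℝ) + 1))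
  have hD : D.Countable := countable_iUnion fun k =>
    (bigOsc_finite l hl f hf _ (by positivity)).countable
  have hc : ContinuousOn f (Ioo 0 1 \ D) := by
    rintro x ⟨hx, hxD⟩
    rw [Metric.continuousWithinAt_iff]
    intro ε hε
    obtain ⟨k, hk⟩ := exists_nat_one_div_lt hε
    have : x ∉ bigOsc f (1 / ((k : ℝ) + 1)) := fun h => hxD (mem_iUnion.2 ⟨k, h⟩)
    simp only [bigOsc, mem_ofPred_eq, not_and, not_forall] at this
    obtain ⟨δ, hδ, h⟩ := this hx
    refine ⟨δ, hδ, fun y hy hyx => ?_⟩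
    by_contra hcon
    exact h ⟨y, Ioo_subset_Icc_self hy.1, hyx, by
      rw [Real.dist_eq] at hcon; linarith⟩
  have hms : MeasurableSet (Ioo (0 : ℝ) 1 \ D) := measurableSet_Ioo.diff hD.measurableSet
  have hae : (Ioo (0 : ℝ) 1 \ D : Set ℝ) =ᵐ[volume] Icc (0 : ℝ) 1 :=
    (sdiff_null_ae_eq_self (hD.measure_zero volume)).trans Ioo_ae_eq_Icc
  obtain ⟨M, hM⟩ := lamVar_bdd l hl f hf
  have hm := hc.aestronglyMeasurable (μ := volume) hms
  have : IntegrableOn f (Ioo 0 1 \ D) := by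
    refine IntegrableOn.of_bound ?_ hm M ?_
    · exact (measure_mono (sdiff_subset.trans Ioo_subset_Icc_self)).trans_lt
        measure_Icc_lt_top
    · exact (ae_restrict_iff' hms).2
        (Eventually.of_forall fun x hx => hM x (Ioo_subset_Icc_self hx.1))
  exact this.congr_set_ae hae.symm

/-- The Kantorovich polynomials diminish the Λ-variation:
if `Λ` is a Λ-sequence and `f ∈ ΛBV`, then `V_Λ(K_n f) ≤ V_Λ(f)` for every `n ∈ ℕ`. -/
theorem kantorovich_diminishes_lamVar (l : ℕ → ℝ) (hl : IsLambdaSeq l)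
    (f : ℝ → ℝ) (hf : lamVar l f < ⊤) (n : ℕ) :
    lamVar l (kant n f) ≤ lamVar l f := by
  have hint := lamVar_integrableOn l hl f hf
  have hn : (0 : ℝ) < (n : ℝ) + 1 := by positivity
  let g : ℕ → ℝ := fun k => (n + 1) * ∫ t in ((k : ℝ) / (n + 1))..(((k : ℝ) + 1) / (n + 1)), f t
  have hg : ∀ k : ℕ, g k = ∫ u in (0 : ℝ)..1, f (u / (n + 1) + k / (n + 1)) := by
    intro k
    rw [intervalIntegral.integral_comp_div_add (fun t => f t) hn.ne']
    simp only [g, smul_eq_mul]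
    congr 2 <;> ring
  have hgi : ∀ k : ℕ, k ≤ n →
      IntervalIntegrable (fun u => f (u / (n + 1) + k / (n + 1))) volume 0 1 := by
    intro k hk
    have hk' : (k : ℝ) ≤ n := by exact_mod_cast hk
    have h1 : IntervalIntegrable f volume ((k : ℝ) / (n + 1)) (((k : ℝ) + 1) / (n + 1)) := by
      rw [intervalIntegrable_iff_integrableOn_Icc_of_le (by gcongr; linarith)]
      refine hint.mono_set (Icc_subset_Icc (by positivity) ?_)
      rw [div_le_one hn]; linarith
    have h2 := (h1.comp_add_right ((k : ℝ) / (n + 1))).comp_mul_left (c := ((n : ℝ) + 1)⁻¹)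
    convert h2 using 1
    · ext u; congr 1; ring
    · simp
    · field_simp; ring
  have hkant : ∀ x, kant n f x = kBern n g x := fun x => rfl
  unfold lamVar
  conv_lhs => unfold lamVarOn
  refine iSup_le fun m => iSup_le fun x => iSup_le fun hx => iSup_le fun hx01 =>
    iSup_le fun β => ?_
  change _ ≤ lamVar l f
  rw [← ENNReal.ofReal_sum_of_nonneg
    (fun j _ => div_nonneg (abs_nonneg _) (hl.2.1 _).le),
    ENNReal.ofReal_le_iff_le_toReal hf.ne]
  have hw : ∀ j : Fin m, 0 ≤ 1 / l (β j) := fun j => (one_div_pos.2 (hl.2.1 _)).le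
  have := core_bound (fun j => 1 / l (β j)) hw (lamVar l f).toReal x hx hx01 n g (by
    intro k hk hkn
    simp_rw [hg]
    simp_rw [← intervalIntegral.integral_sub (hgi _ (hkn _)) (hgi _ (hkn _))]
    refine avg_bound _ hw _ _ (fun j => (hgi _ (hkn _)).sub (hgi _ (hkn _))) fun u hu => ?_
    refine lamVar_real l hl f hf (fun j => u / (n + 1) + k j / (n + 1)) ?_ ?_ β
    · intro i j hij
      have : (k i : ℝ) ≤ k j := by exact_mod_cast hk hij
      dsimp only
      gcongr
    · intro j
      have : (k j : ℝ) ≤ n := by exact_mod_cast hkn j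
      have h0 := hu.1
      refine ⟨by positivity, ?_⟩
      rw [← add_div, div_le_one hn]
      linarith [hu.2]) n (fun _ => 0) (fun _ _ _ => le_rfl) (by simp)
  refine le_trans (le_of_eq ?_) this
  refine Finset.sum_congr rfl fun j _ => ?_
  simp only [hkant, add_zero]
  ring
end

section
/- If Λ is a Λ-sequence and f ∈ 𝔄, then ‖B_nf‖_Λ → ‖f‖_Λ as n → ∞ (as a limit in [0,∞]: if f is of bounded Λ-variation the norms converge to ‖f‖_Λ, and otherwise V_Λ(B_nf) → ∞). -/
open Filter Set MeasureTheory
open scoped ENNReal Topology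

/-- The class `𝔄`: bounded functions on `[0,1]` with one-sided limits at every interior
point, whose value there lies between the two one-sided limits. -/
def MemA (f : ℝ → ℝ) : Prop :=
  (∃ C : ℝ, ∀ x ∈ Set.Icc (0 : ℝ) 1, |f x| ≤ C) ∧
  ∀ x ∈ Set.Ioo (0 : ℝ) 1, ∃ L R : ℝ,
    Tendsto f (𝓝[<] x) (𝓝 L) ∧ Tendsto f (𝓝[>] x) (𝓝 R) ∧
    min L R ≤ f x ∧ f x ≤ max L R


/-- The weighted sum as a functional. -/
noncomputable def lamT (l : ℕ → ℝ) {m : ℕ} (β : Equiv.Perm (Fin m)) (v : Fin (m + 1) → ℝ) : ℝ :=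
  ∑ j : Fin m, |v j.succ - v j.castSucc| / l (β j)

lemma lamT_ofReal (l : ℕ → ℝ) (hl : ∀ n, 0 < l n) {m : ℕ} (β : Equiv.Perm (Fin m))
    (v : Fin (m + 1) → ℝ) :
    ∑ j : Fin m, ENNReal.ofReal (|v j.succ - v j.castSucc| / l (β j))
      = ENNReal.ofReal (lamT l β v) := by
  unfold lamT
  rw [ENNReal.ofReal_sum_of_nonneg]
  intro j _
  exact div_nonneg (abs_nonneg _) (hl _).le

lemma lamT_le (l : ℕ → ℝ) (hl : ∀ n, 0 < l n) {m : ℕ} (β : Equiv.Perm (Fin m))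
    (f : ℝ → ℝ) (x : Fin (m + 1) → ℝ) (hx : Monotone x) (hx' : ∀ j, x j ∈ Icc (0 : ℝ) 1) :
    ENNReal.ofReal (lamT l β (fun j => f (x j))) ≤ lamVar l f := by
  rw [← lamT_ofReal l hl]
  unfold lamVar lamVarOn
  exact le_iSup_of_le m (le_iSup_of_le x (le_iSup_of_le hx (le_iSup_of_le hx'
    (le_iSup_of_le β le_rfl))))

lemma lamT_convex (l : ℕ → ℝ) (hl : ∀ n, 0 < l n) {m : ℕ} (β : Equiv.Perm (Fin m))
    (x : Fin (m + 1) → ℝ) :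
    ConvexOn ℝ univ (fun g : ℝ → ℝ => lamT l β (fun j => g (x j))) := by
  refine ⟨convex_univ, ?_⟩
  intro g _ h _ a b ha hb _
  simp only [lamT, smul_eq_mul, Finset.mul_sum, Pi.add_apply, Pi.smul_apply]
  rw [← Finset.sum_add_distrib]
  refine Finset.sum_le_sum fun j _ => ?_
  rw [← mul_div_assoc, ← mul_div_assoc, ← add_div]
  refine div_le_div_of_nonneg_right ?_ (hl _).le
  calc _ = |a * (g (x j.succ) - g (x j.castSucc)) + b * (h (x j.succ) - h (x j.castSucc))| := by
        congr 1; ring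
    _ ≤ _ := by
        refine (abs_add_le _ _).trans ?_
        rw [abs_mul, abs_mul, abs_of_nonneg ha, abs_of_nonneg hb]

lemma lamT_cont (l : ℕ → ℝ) {m : ℕ} (β : Equiv.Perm (Fin m)) :
    Continuous (lamT l β) := by
  unfold lamT
  fun_prop

lemma vertex_lemma (T : (ℝ → ℝ) → ℝ) (hT : ConvexOn ℝ univ T) (f L R : ℝ → ℝ) (s : Finset ℝ)
    (hs : ∀ p ∈ s, f p ∈ segment ℝ (L p) (R p)) :
    ∃ g : ℝ → ℝ, (∀ p ∈ s, g p = L p ∨ g p = R p) ∧ (∀ p ∉ s, g p = f p) ∧ T f ≤ T g := by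
  classical
  induction s using Finset.induction_on with
  | empty => exact ⟨f, by simp, by simp, le_rfl⟩
  | insert p s hp ih =>
    obtain ⟨g, h1, h2, h3⟩ := ih (fun q hq => hs q (Finset.mem_insert_of_mem hq))
    have hmem : g ∈ segment ℝ (Function.update g p (L p)) (Function.update g p (R p)) := by
      obtain ⟨a, b, ha, hb, hab, h⟩ := hs p (Finset.mem_insert_self _ _)
      refine ⟨a, b, ha, hb, hab, ?_⟩
      ext q
      by_cases hq : q = p
      · subst hq
        simp only [Pi.add_apply, Pi.smul_apply, Function.update_self]
        rw [h, h2 q hp]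
      · simp only [Pi.add_apply, Pi.smul_apply, Function.update_of_ne hq, smul_eq_mul]
        rw [← add_mul, hab, one_mul]
    have key := hT.le_max_of_mem_segment (mem_univ _) (mem_univ _) hmem
    have fin : ∀ v, (v = L p ∨ v = R p) → T g ≤ T (Function.update g p v) →
        ∃ g : ℝ → ℝ, (∀ q ∈ insert p s, g q = L q ∨ g q = R q) ∧
          (∀ q ∉ insert p s, g q = f q) ∧ T f ≤ T g := by
      intro v hv hT'
      refine ⟨Function.update g p v, ?_, ?_, h3.trans hT'⟩
      · intro q hq
        by_cases hqp : q = p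
        · subst hqp; simpa using hv
        · rw [Function.update_of_ne hqp]
          exact h1 q (Finset.mem_of_mem_insert_of_ne hq hqp)
      · intro q hq
        rw [Finset.mem_insert, not_or] at hq
        rw [Function.update_of_ne hq.1]
        exact h2 q hq.2
    rcases le_max_iff.1 key with h | h
    · exact fin _ (Or.inl rfl) h
    · exact fin _ (Or.inr rfl) h

lemma bern_zero (n : ℕ) (f : ℝ → ℝ) : bern n f 0 = f 0 := by
  unfold bern
  rw [Finset.sum_eq_single 0]
  · simp
  · intro k _ hk; simp [hk]
  · simp

lemma bern_one (n : ℕ) (hn : n ≠ 0) (f : ℝ → ℝ) : bern n f 1 = f 1 := by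
  unfold bern
  rw [Finset.sum_eq_single n]
  · simp [hn]
  · intro k hk hk'
    have : n - k ≠ 0 := by rw [Finset.mem_range] at hk; omega
    simp [this]
  · simp

lemma bern_eq (n : ℕ) (f : ℝ → ℝ) (y : unitInterval) :
    bern n f y = ∑ k : Fin (n + 1), f ((k : ℝ) / n) * bernstein n k y := by
  unfold bern
  rw [← Fin.sum_univ_eq_sum_range (fun k => f ((k : ℝ) / n) * (n.choose k : ℝ) * (y : ℝ) ^ k * (1 - (y : ℝ)) ^ (n - k))]
  refine Finset.sum_congr rfl fun k _ => ?_
  rw [bernstein_apply]; ring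

lemma bern_close (f : ℝ → ℝ) (C : ℝ) (hC : ∀ x ∈ Icc (0 : ℝ) 1, |f x| ≤ C) (y : ℝ)
    (hy : y ∈ Icc (0 : ℝ) 1) (L ε δ : ℝ) (hε : 0 < ε) (hδ : 0 < δ)
    (h : ∀ t, |t - y| < δ → |f t - L| ≤ ε) (n : ℕ) (hn : n ≠ 0) :
    |bern n f y - L| ≤ ε + (C + |L|) / δ ^ 2 / n := by
  have hK : 0 ≤ C + |L| := by
    have := hC 0 (by simp); have := abs_nonneg (f 0); have := abs_nonneg L; linarith
  have hn' : (0 : ℝ) < n := by positivity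
  lift y to unitInterval using hy
  have hp := bernstein.probability n y
  have hv := bernstein.variance hn y
  have key : ∀ t ∈ Icc (0 : ℝ) 1, |f t - L| ≤ ε + (C + |L|) / δ ^ 2 * ((y : ℝ) - t) ^ 2 := by
    intro t ht
    by_cases htd : |t - y| < δ
    · have := h t htd
      have : 0 ≤ (C + |L|) / δ ^ 2 * ((y : ℝ) - t) ^ 2 := by positivity
      linarith
    · have h1 : |f t - L| ≤ C + |L| := (abs_sub _ _).trans (by linarith [hC t ht])
      have h2 : δ ^ 2 ≤ ((y : ℝ) - t) ^ 2 := by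
        rw [← sq_abs ((y : ℝ) - t), abs_sub_comm]
        exact pow_le_pow_left₀ hδ.le (not_lt.1 htd) 2
      have h3 : (C + |L|) ≤ (C + |L|) / δ ^ 2 * ((y : ℝ) - t) ^ 2 := by
        rw [div_mul_eq_mul_div, le_div_iff₀ (by positivity)]
        gcongr
      linarith
  have e1 : bern n f y - L = ∑ k : Fin (n + 1), (f ((k : ℝ) / n) - L) * bernstein n k y := by
    simp only [sub_mul, Finset.sum_sub_distrib, ← Finset.mul_sum, hp, bern_eq, mul_one]
  rw [e1]
  calc _ ≤ ∑ k : Fin (n + 1), |(f ((k : ℝ) / n) - L) * bernstein n k y| :=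
        Finset.abs_sum_le_sum_abs _ _
    _ ≤ ∑ k : Fin (n + 1), (ε + (C + |L|) / δ ^ 2 * ((y : ℝ) - (k : ℝ) / n) ^ 2) * bernstein n k y := by
        refine Finset.sum_le_sum fun k _ => ?_
        rw [abs_mul, abs_of_nonneg (bernstein_nonneg : 0 ≤ bernstein n k y)]
        refine mul_le_mul_of_nonneg_right (key _ ⟨by positivity, ?_⟩) bernstein_nonneg
        rw [div_le_one hn']
        exact_mod_cast Nat.lt_succ_iff.1 k.2
    _ = ε + (C + |L|) / δ ^ 2 * ((y : ℝ) * (1 - y) / n) := by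
        rw [← hv, Finset.mul_sum]
        simp only [add_mul, Finset.sum_add_distrib, ← Finset.mul_sum, hp, mul_one, mul_assoc]
        rfl
    _ ≤ _ := by
        rw [div_eq_mul_one_div ((C + |L|) / δ ^ 2) (n : ℝ)]
        have h0 := y.2.1
        have h1 := y.2.2
        gcongr
        nlinarith

lemma bern_close_ev (f : ℝ → ℝ) (C : ℝ) (hC : ∀ x ∈ Icc (0 : ℝ) 1, |f x| ≤ C) (y : ℝ)
    (hy : y ∈ Icc (0 : ℝ) 1) (L η : ℝ) (hη : 0 < η)
    (h : ∀ᶠ t in 𝓝 y, |f t - L| ≤ η / 2) :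
    ∀ᶠ n : ℕ in atTop, |bern n f y - L| < η := by
  obtain ⟨δ, hδ, hd⟩ := Metric.eventually_nhds_iff.1 h
  have lim : Tendsto (fun n : ℕ => (C + |L|) / δ ^ 2 / n) atTop (𝓝 0) :=
    tendsto_const_div_atTop_nhds_zero_nat _
  filter_upwards [lim.eventually (gt_mem_nhds (half_pos hη)), eventually_ne_atTop 0] with n h1 h2
  have := bern_close f C hC y hy L (η / 2) δ (half_pos hη) hδ (fun t ht => hd (by simpa [Real.dist_eq] using ht)) n h2
  linarith

/-- `v` is an attainable limiting value of Bernstein polynomials near `p`. -/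
def GoodVal (f : ℝ → ℝ) (p v : ℝ) : Prop :=
  ∃ σ : ℝ, ∀ η > 0, ∀ᶠ δ in 𝓝[>] (0 : ℝ), p + σ * δ ∈ Icc (0 : ℝ) 1 ∧
    ∀ᶠ n : ℕ in atTop, |bern n f (p + σ * δ) - v| < η

lemma good_interior (f : ℝ → ℝ) (C : ℝ) (hC : ∀ x ∈ Icc (0 : ℝ) 1, |f x| ≤ C) (p v σ : ℝ)
    (hp : p ∈ Ioo (0 : ℝ) 1) (S : Set ℝ) (hS : IsOpen S) (hv : Tendsto f (𝓝[S] p) (𝓝 v))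
    (hσ : ∀ δ > 0, p + σ * δ ∈ S) : GoodVal f p v := by
  refine ⟨σ, fun η hη => ?_⟩
  have hc : Tendsto (fun δ : ℝ => p + σ * δ) (𝓝[>] 0) (𝓝 p) := by
    have : Continuous (fun δ : ℝ => p + σ * δ) := by fun_prop
    simpa using (this.tendsto 0).mono_left nhdsWithin_le_nhds
  have hc' : Tendsto (fun δ : ℝ => p + σ * δ) (𝓝[>] 0) (𝓝[S] p) :=
    tendsto_nhdsWithin_iff.2 ⟨hc, eventually_mem_nhdsWithin.mono fun δ hδ => hσ δ hδ⟩
  have e1 : ∀ᶠ t in 𝓝[S] p, |f t - v| ≤ η / 2 := by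
    filter_upwards [hv.eventually (Metric.ball_mem_nhds v (half_pos hη))] with t ht
    exact (by simpa [Real.dist_eq] using ht : |f t - v| < η / 2).le
  have e2 : ∀ᶠ t in 𝓝[S] p, ∀ᶠ s in 𝓝[S] t, |f s - v| ≤ η / 2 :=
    eventually_eventually_nhdsWithin.2 e1
  filter_upwards [hc.eventually (Icc_mem_nhds hp.1 hp.2), hc'.eventually e2,
    eventually_mem_nhdsWithin] with δ h1 h2 h3
  refine ⟨h1, bern_close_ev f C hC _ h1 v η hη ?_⟩
  rwa [hS.nhdsWithin_eq (hσ δ h3)] at h2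

lemma good_exists (f : ℝ → ℝ) (hf : MemA f) (p : ℝ) (hp : p ∈ Icc (0 : ℝ) 1) :
    ∃ L R : ℝ, f p ∈ segment ℝ L R ∧ GoodVal f p L ∧ GoodVal f p R := by
  obtain ⟨⟨C, hC⟩, h⟩ := hf
  by_cases hpi : p ∈ Ioo (0 : ℝ) 1
  · obtain ⟨L, R, hL, hR, h1, h2⟩ := h p hpi
    refine ⟨L, R, ?_, ?_, ?_⟩
    · rw [segment_eq_uIcc]; exact ⟨h1, h2⟩
    · exact good_interior f C hC p L (-1) hpi _ isOpen_Iio hL (fun δ hδ => by simp [hδ])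
    · exact good_interior f C hC p R 1 hpi _ isOpen_Ioi hR (fun δ hδ => by simp [hδ])
  · have : GoodVal f p (f p) := by
      refine ⟨0, fun η hη => Eventually.of_forall fun δ => ⟨by simpa using hp, ?_⟩⟩
      filter_upwards [eventually_ne_atTop 0] with n hn
      have : bern n f p = f p := by
        by_cases h0 : p = 0
        · rw [h0, bern_zero]
        · have : p = 1 := by
            by_contra h1
            exact hpi ⟨lt_of_le_of_ne hp.1 (Ne.symm h0), lt_of_le_of_ne hp.2 h1⟩
          rw [this, bern_one n hn]
      simpa [this] using hη
    exact ⟨f p, f p, by simp, this, this⟩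

lemma lower (l : ℕ → ℝ) (hl : ∀ n, 0 < l n) (f : ℝ → ℝ) (hf : MemA f) (a : ℝ≥0∞)
    (ha : a < lamVar l f) : ∀ᶠ n in atTop, a < lamVar l (bern n f) := by
  classical
  unfold lamVar lamVarOn at ha
  simp only [lt_iSup_iff] at ha
  obtain ⟨m, x, hx, hx', β, ha⟩ := ha
  rw [lamT_ofReal l hl β (fun j => f (x j))] at ha
  have : ∀ p, ∃ L R : ℝ, p ∈ Icc (0 : ℝ) 1 → f p ∈ segment ℝ L R ∧ GoodVal f p L ∧ GoodVal f p R := by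
    intro p
    by_cases hp : p ∈ Icc (0 : ℝ) 1
    · obtain ⟨L, R, h⟩ := good_exists f hf p hp
      exact ⟨L, R, fun _ => h⟩
    · exact ⟨0, 0, fun h => absurd h hp⟩
  choose L R hLR using this
  obtain ⟨g, hg, -, hT⟩ := vertex_lemma _ (lamT_convex l hl β x) f L R (Finset.univ.image x) (by
    intro p hp
    obtain ⟨j, -, rfl⟩ := Finset.mem_image.1 hp
    exact (hLR _ (hx' j)).1)
  have hgood : ∀ p, ∃ σ : ℝ, p ∈ Finset.univ.image x → ∀ η > 0, ∀ᶠ δ in 𝓝[>] (0 : ℝ),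
      p + σ * δ ∈ Icc (0 : ℝ) 1 ∧ ∀ᶠ n : ℕ in atTop, |bern n f (p + σ * δ) - g p| < η := by
    intro p
    by_cases hp : p ∈ Finset.univ.image x
    · have hpI : p ∈ Icc (0 : ℝ) 1 := by
        obtain ⟨j, -, rfl⟩ := Finset.mem_image.1 hp
        exact hx' j
      have : GoodVal f p (g p) := by
        rcases hg p hp with h | h
        · rw [h]; exact (hLR p hpI).2.1
        · rw [h]; exact (hLR p hpI).2.2
      obtain ⟨σ, h⟩ := this
      exact ⟨σ, fun _ => h⟩
    · exact ⟨0, fun h => absurd h hp⟩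
  choose σ hσ using hgood
  have ha' : a < ENNReal.ofReal (lamT l β (fun j => g (x j))) :=
    ha.trans_le (ENNReal.ofReal_le_ofReal hT)
  have hopen : IsOpen {v : Fin (m + 1) → ℝ | a < ENNReal.ofReal (lamT l β v)} :=
    isOpen_lt continuous_const (ENNReal.continuous_ofReal.comp (lamT_cont l β))
  obtain ⟨η, hη, hball⟩ := Metric.isOpen_iff.1 hopen (fun j => g (x j)) ha'
  have ev1 : ∀ᶠ δ in 𝓝[>] (0 : ℝ), ∀ j, x j + σ (x j) * δ ∈ Icc (0 : ℝ) 1 ∧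
      ∀ᶠ n : ℕ in atTop, |bern n f (x j + σ (x j) * δ) - g (x j)| < η :=
    eventually_all.2 fun j => hσ (x j) (Finset.mem_image_of_mem _ (Finset.mem_univ _)) η hη
  have ev2 : ∀ᶠ δ in 𝓝[>] (0 : ℝ), ∀ i j, i ≤ j → x i + σ (x i) * δ ≤ x j + σ (x j) * δ := by
    refine eventually_all.2 fun i => eventually_all.2 fun j => ?_
    by_cases hij : i ≤ j
    · rcases (hx hij).eq_or_lt with h | h
      · exact Eventually.of_forall fun δ _ => by rw [h]
      · have hc : ∀ q, Tendsto (fun δ : ℝ => q + σ q * δ) (𝓝[>] 0) (𝓝 q) := by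
          intro q
          have : Continuous (fun δ : ℝ => q + σ q * δ) := by fun_prop
          simpa using (this.tendsto 0).mono_left nhdsWithin_le_nhds
        filter_upwards [(hc (x i)).eventually_lt (hc (x j)) h] with δ hδ _
        exact hδ.le
    · exact Eventually.of_forall fun δ h => absurd h hij
  obtain ⟨δ, h1, h2⟩ := (ev1.and ev2).exists
  have h3 : ∀ᶠ n : ℕ in atTop, ∀ j, |bern n f (x j + σ (x j) * δ) - g (x j)| < η :=
    eventually_all.2 fun j => (h1 j).2
  filter_upwards [h3] with n hn
  have hmem : (fun j => bern n f (x j + σ (x j) * δ)) ∈ Metric.ball (fun j => g (x j)) η := by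
    rw [Metric.mem_ball, dist_pi_lt_iff hη]
    intro j
    rw [Real.dist_eq]; exact hn j
  exact (show a < _ from hball hmem).trans_le
    (lamT_le l hl β (bern n f) (fun j => x j + σ (x j) * δ) (fun i j hij => h2 i j hij)
      (fun j => (h1 j).1))

open Classical in
/-- The number of coordinates at most `x`. -/
noncomputable def cnt {n : ℕ} (x : ℝ) (u : Fin n → ℝ) : Finset (Fin n) :=
  Finset.univ.filter (fun i => u i ≤ x)

/-- Uniform law on `[0,1]`. -/
noncomputable def unifM : Measure ℝ := volume.restrict (Icc 0 1)

instance : IsProbabilityMeasure unifM := ⟨by simp [unifM]⟩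

open Classical in
lemma cnt_expand {n : ℕ} (x : ℝ) (h : ℕ → ℝ) (u : Fin n → ℝ) :
    h (cnt x u).card = ∑ A ∈ (Finset.univ : Finset (Fin n)).powerset,
      h A.card * ∏ i, (if i ∈ A then (Iic x).indicator (fun _ => (1 : ℝ)) (u i)
        else (Ioi x).indicator (fun _ => (1 : ℝ)) (u i)) := by
  rw [Finset.sum_eq_single (cnt x u)]
  · rw [Finset.prod_eq_one, mul_one]
    intro i _
    by_cases hi : u i ≤ x
    · simp [cnt, hi]
    · simp [cnt, hi, not_le.1 hi]
  · intro A _ hA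
    have : ∃ i, ¬ (i ∈ A ↔ u i ≤ x) := by
      by_contra hcon
      push Not at hcon
      exact hA (by ext i; simp [cnt, hcon i])
    obtain ⟨i, hi⟩ := this
    rw [Finset.prod_eq_zero (Finset.mem_univ i), mul_zero]
    by_cases hiA : i ∈ A
    · simp [hiA] at hi ⊢; exact hi
    · simp [hiA] at hi ⊢; exact hi
  · simp

lemma unif_Iic (x : ℝ) (hx : x ∈ Icc (0 : ℝ) 1) : unifM.real (Iic x) = x := by
  have : Iic x ∩ Icc 0 1 = Icc 0 x := by
    ext t; simp; constructor
    · rintro ⟨a, b, c⟩; exact ⟨b, a⟩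
    · rintro ⟨a, b⟩; exact ⟨b, a, b.trans hx.2⟩
  rw [unifM, measureReal_restrict_apply measurableSet_Iic, this]
  simp [hx.1]

lemma unif_Ioi (x : ℝ) (hx : x ∈ Icc (0 : ℝ) 1) : unifM.real (Ioi x) = 1 - x := by
  rw [← compl_Iic, probReal_compl_eq_one_sub measurableSet_Iic, unif_Iic x hx]

open Classical in
lemma cnt_integral {n : ℕ} (x : ℝ) (hx : x ∈ Icc (0 : ℝ) 1) (h : ℕ → ℝ) :
    Integrable (fun u : Fin n → ℝ => h (cnt x u).card) (Measure.pi fun _ => unifM) ∧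
    ∫ u : Fin n → ℝ, h (cnt x u).card ∂(Measure.pi fun _ => unifM)
      = ∑ k ∈ Finset.range (n + 1), h k * (n.choose k : ℝ) * x ^ k * (1 - x) ^ (n - k) := by
  simp only [cnt_expand]
  set G : Finset (Fin n) → Fin n → ℝ → ℝ := fun A i t =>
    if i ∈ A then (Iic x).indicator (fun _ => (1 : ℝ)) t
      else (Ioi x).indicator (fun _ => (1 : ℝ)) t with hG
  have hGi : ∀ A i, Integrable (G A i) unifM := by
    intro A i
    by_cases hi : i ∈ A
    · simp only [hG, hi, if_true]
      exact (integrable_const _).indicator measurableSet_Iic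
    · simp only [hG, hi, if_false]
      exact (integrable_const _).indicator measurableSet_Ioi
  have hGint : ∀ A i, ∫ t, G A i t ∂unifM = if i ∈ A then x else 1 - x := by
    intro A i
    by_cases hi : i ∈ A
    · simp only [hG, hi, if_true]
      rw [integral_indicator_const _ measurableSet_Iic, unif_Iic x hx]; simp
    · simp only [hG, hi, if_false]
      rw [integral_indicator_const _ measurableSet_Ioi, unif_Ioi x hx]; simp
  have hI : ∀ A ∈ (Finset.univ : Finset (Fin n)).powerset, Integrable
      (fun u : Fin n → ℝ => h A.card * ∏ i, G A i (u i)) (Measure.pi fun _ => unifM) :=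
    fun A _ => (Integrable.fintype_prod (fun i => hGi A i)).const_mul _
  refine ⟨integrable_finsetSum _ hI, ?_⟩
  rw [integral_finsetSum _ hI]
  have : ∀ A ∈ (Finset.univ : Finset (Fin n)).powerset,
      ∫ u : Fin n → ℝ, h A.card * ∏ i, G A i (u i) ∂(Measure.pi fun _ => unifM)
        = (fun k => h k * (x ^ k * (1 - x) ^ (n - k))) A.card := by
    intro A _
    rw [integral_const_mul, integral_fintype_prod_eq_prod]
    simp only [hGint]
    congr 1
    rw [Finset.prod_ite]
    simp only [Finset.prod_const]
    congr 2
    · simp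
    · rw [Finset.filter_not]
      simp [Finset.card_sdiff]
  rw [Finset.sum_congr rfl this,
    Finset.sum_powerset_apply_card (fun k => h k * (x ^ k * (1 - x) ^ (n - k)))]
  simp only [Finset.card_univ, Fintype.card_fin, nsmul_eq_mul]
  exact Finset.sum_congr rfl fun k _ => by ring

lemma upper (l : ℕ → ℝ) (hl : ∀ n, 0 < l n) (f : ℝ → ℝ) (n : ℕ) (hn : n ≠ 0) :
    lamVar l (bern n f) ≤ lamVar l f := by
  by_cases htop : lamVar l f = ⊤
  · rw [htop]; exact le_top
  conv_lhs => unfold lamVar lamVarOn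
  refine iSup_le fun m => iSup_le fun x => iSup_le fun hx => iSup_le fun hx' => iSup_le fun β => ?_
  rw [lamT_ofReal l hl β (fun j => bern n f (x j))]
  rw [ENNReal.ofReal_le_iff_le_toReal htop]
  set μ : Measure (Fin n → ℝ) := Measure.pi fun _ => unifM with hμ
  set X : Fin (m + 1) → (Fin n → ℝ) → ℝ := fun j u => f (((cnt (x j) u).card : ℝ) / n) with hX
  have hXi : ∀ j, Integrable (X j) μ := fun j =>
    (cnt_integral (x j) (hx' j) (fun k => f ((k : ℝ) / n))).1
  have hXe : ∀ j, bern n f (x j) = ∫ u, X j u ∂μ := fun j =>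
    (cnt_integral (x j) (hx' j) (fun k => f ((k : ℝ) / n))).2.symm
  have hle : ∀ u, lamT l β (fun j => X j u) ≤ (lamVar l f).toReal := by
    intro u
    rw [← ENNReal.ofReal_le_iff_le_toReal htop]
    refine lamT_le l hl β f (fun j => ((cnt (x j) u).card : ℝ) / n) ?_ ?_
    · intro i j hij
      simp only
      gcongr
      intro a
      simp only [cnt, Finset.mem_filter, Finset.mem_univ, true_and]
      exact fun h => h.trans (hx hij)
    · intro j
      refine ⟨by positivity, ?_⟩
      rw [div_le_one (by positivity)]
      exact_mod_cast (Finset.card_le_univ _).trans (by simp)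
  have hTi : ∀ j : Fin m, Integrable (fun u => |X j.succ u - X j.castSucc u| / l (β j)) μ :=
    fun j => (((hXi _).sub (hXi _)).abs).div_const _
  calc lamT l β (fun j => bern n f (x j)) ≤ ∫ u, lamT l β (fun j => X j u) ∂μ := by
        simp only [lamT]
        rw [integral_finsetSum _ (fun j _ => hTi j)]
        refine Finset.sum_le_sum fun j _ => ?_
        rw [integral_div, hXe, hXe, ← integral_sub (hXi _) (hXi _)]
        exact div_le_div_of_nonneg_right (abs_integral_le_integral_abs) (hl _).le
    _ ≤ ∫ u, (lamVar l f).toReal ∂μ := by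
        refine integral_mono ?_ (integrable_const _) hle
        simp only [lamT]
        exact integrable_finsetSum _ (fun j _ => hTi j)
    _ = _ := by simp

/-- If `Λ` is a Λ-sequence and `f ∈ 𝔄`, then `‖B_n f‖_Λ → ‖f‖_Λ`
as a limit in `[0,∞]`. -/
theorem lamNorm_bernstein_tendsto_of_memA (l : ℕ → ℝ) (hl : IsLambdaSeq l)
    (f : ℝ → ℝ) (hf : MemA f) :
    Tendsto (fun n => lamNorm l (bern n f)) atTop (𝓝 (lamNorm l f)) := by
  have hV : Tendsto (fun n => lamVar l (bern n f)) atTop (𝓝 (lamVar l f)) := by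
    refine tendsto_order.2 ⟨fun a ha => lower l hl.2.1 f hf a ha, fun a ha => ?_⟩
    filter_upwards [eventually_ne_atTop 0] with n hn
    exact (upper l hl.2.1 f n hn).trans_lt ha
  simp only [lamNorm, bern_zero]
  exact hV.add tendsto_const_nhds
end

section
/- Let Λ be a proper Λ-sequence and f : [0,1] → ℝ a Lebesgue-integrable function. Then ‖K_nf − f‖_Λ → 0 as n → ∞ (with V_Λ(K_nf − f) understood as a quantity in [0,∞]) if and only if f is continuous, of bounded Λ-variation, and continuous in Λ-variation. -/
open Filter Set MeasureTheory
open scoped ENNReal Topology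

lemma le_lamVar (l : ℕ → ℝ) (f : ℝ → ℝ) {m : ℕ} (x : Fin (m + 1) → ℝ) (hx : Monotone x)
    (hK : ∀ j, x j ∈ Set.Icc (0:ℝ) 1) (β : Equiv.Perm (Fin m)) :
    ∑ j : Fin m, ENNReal.ofReal (|f (x j.succ) - f (x j.castSucc)| / l (β j)) ≤ lamVar l f := by
  unfold lamVar lamVarOn
  exact le_iSup_of_le m (le_iSup_of_le x (le_iSup_of_le hx (le_iSup_of_le hK
    (le_iSup (fun β : Equiv.Perm (Fin m) =>
      ∑ j : Fin m, ENNReal.ofReal (|f (x j.succ) - f (x j.castSucc)| / l (β j))) β))))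

lemma lamVar_le (l : ℕ → ℝ) (f : ℝ → ℝ) (B : ℝ≥0∞)
    (h : ∀ (m : ℕ) (x : Fin (m + 1) → ℝ), Monotone x → (∀ j, x j ∈ Set.Icc (0:ℝ) 1) →
      ∀ β : Equiv.Perm (Fin m),
      ∑ j : Fin m, ENNReal.ofReal (|f (x j.succ) - f (x j.castSucc)| / l (β j)) ≤ B) :
    lamVar l f ≤ B := by
  unfold lamVar lamVarOn
  exact iSup_le fun m => iSup_le fun x => iSup_le fun hx => iSup_le fun hK => iSup_le fun β =>
    h m x hx hK β

lemma lamVar_le_add (l : ℕ → ℝ) (hl : ∀ n, 0 < l n) (f g h : ℝ → ℝ)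
    (H : ∀ x ∈ Set.Icc (0:ℝ) 1, ∀ y ∈ Set.Icc (0:ℝ) 1,
      |h y - h x| ≤ |f y - f x| + |g y - g x|) :
    lamVar l h ≤ lamVar l f + lamVar l g := by
  refine lamVar_le _ _ _ fun m x hx hK β => ?_
  refine le_trans ?_ (add_le_add (le_lamVar l f x hx hK β) (le_lamVar l g x hx hK β))
  rw [← Finset.sum_add_distrib]
  refine Finset.sum_le_sum fun j _ => ?_
  have := hl (β j)
  rw [← ENNReal.ofReal_add (by positivity) (by positivity), ← add_div]
  exact ENNReal.ofReal_le_ofReal (by gcongr; exact H _ (hK _) _ (hK _))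

lemma lamVar_anti (l l' : ℕ → ℝ) (hl : ∀ n, 0 < l n) (h : ∀ n, l n ≤ l' n) (f : ℝ → ℝ) :
    lamVar l' f ≤ lamVar l f := by
  refine lamVar_le _ _ _ fun m x hx hK β => ?_
  refine le_trans ?_ (le_lamVar l f x hx hK β)
  refine Finset.sum_le_sum fun j _ => ?_
  have := hl (β j)
  exact ENNReal.ofReal_le_ofReal (by gcongr; exact h _)

lemma fin_telescope {m : ℕ} (x : Fin (m + 1) → ℝ) :
    ∑ j : Fin m, (x j.succ - x j.castSucc) = x (Fin.last m) - x 0 := by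
  induction m with
  | zero => simp
  | succ k ih =>
    rw [Fin.sum_univ_castSucc]
    have := ih (fun i => x i.castSucc)
    simp only [← Fin.succ_castSucc] at this
    rw [this]
    simp

lemma lamVar_lip (l : ℕ → ℝ) (hm : Monotone l) (hl : ∀ n, 0 < l n) (f : ℝ → ℝ) (C : ℝ)
    (hC : 0 ≤ C)
    (H : ∀ x ∈ Set.Icc (0:ℝ) 1, ∀ y ∈ Set.Icc (0:ℝ) 1, |f y - f x| ≤ C * |y - x|) :
    lamVar l f ≤ ENNReal.ofReal (C / l 0) := by
  refine lamVar_le _ _ _ fun m x hx hK β => ?_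
  have h0 := hl 0
  have key : ∀ j : Fin m, |f (x j.succ) - f (x j.castSucc)| / l (β j)
      ≤ C / l 0 * (x j.succ - x j.castSucc) := by
    intro j
    have h1 : |x j.succ - x j.castSucc| = x j.succ - x j.castSucc :=
      abs_of_nonneg (sub_nonneg.2 (hx (Fin.castSucc_lt_succ).le))
    have h2 := H _ (hK j.castSucc) _ (hK j.succ)
    rw [h1] at h2
    calc |f (x j.succ) - f (x j.castSucc)| / l (β j)
        ≤ |f (x j.succ) - f (x j.castSucc)| / l 0 := by
          gcongr; exact hm (Nat.zero_le _)
      _ ≤ (C * (x j.succ - x j.castSucc)) / l 0 := by gcongr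
      _ = _ := by ring
  rw [← ENNReal.ofReal_sum_of_nonneg (fun j _ => by have := hl (β j); positivity)]
  apply ENNReal.ofReal_le_ofReal
  refine (Finset.sum_le_sum fun j _ => key j).trans ?_
  rw [← Finset.mul_sum, fin_telescope]
  have h1 := hK (Fin.last m)
  have h2 := hK 0
  have : 0 ≤ C / l 0 := by positivity
  have h3 : x (Fin.last m) - x 0 ≤ 1 := by linarith [h1.2, h2.1]
  nlinarith

lemma abs_le_lamVar (l : ℕ → ℝ) (hl : ∀ n, 0 < l n) (f : ℝ → ℝ) (x : ℝ)
    (hx : x ∈ Set.Icc (0:ℝ) 1) :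
    ENNReal.ofReal (|f x - f 0| / l 0) ≤ lamVar l f := by
  have := le_lamVar l f (m := 1) ![0, x]
    (by intro i j hij; fin_cases i <;> fin_cases j <;> simp_all [hx.1])
    (by intro j; fin_cases j <;> simp_all) 1
  simpa using this

/-- splitting -/
lemma lamVar_split (l : ℕ → ℝ) (hl : ∀ n, 0 < l n) (g : ℝ → ℝ) (M : ℝ)
    (hM : ∀ x ∈ Set.Icc (0:ℝ) 1, |g x| ≤ M) (p : ℕ) :
    lamVar l g ≤ ENNReal.ofReal (2 * M * ∑ i ∈ Finset.range p, 1 / l i)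
      + lamVar (fun n => l (n + p)) g := by
  classical
  refine lamVar_le _ _ _ fun m x hx hK β => ?_
  have hM0 : 0 ≤ M := (abs_nonneg _).trans (hM 0 (by simp))
  have hD : ∀ j : Fin m, |g (x j.succ) - g (x j.castSucc)| ≤ 2 * M := by
    intro j
    have h1 := hM _ (hK j.succ)
    have h2 := hM _ (hK j.castSucc)
    have := abs_sub (g (x j.succ)) (g (x j.castSucc))
    linarith
  rw [← Finset.sum_filter_add_sum_filter_not Finset.univ (fun j : Fin m => (β j : ℕ) < p)]
  refine add_le_add ?_ ?_
  · rw [← ENNReal.ofReal_sum_of_nonneg (fun j _ => by have := hl (β j); positivity)]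
    apply ENNReal.ofReal_le_ofReal
    rw [Finset.mul_sum]
    calc _ ≤ ∑ j ∈ Finset.univ.filter (fun j : Fin m => (β j : ℕ) < p), 2 * M * (1 / l (β j)) := by
          refine Finset.sum_le_sum fun j _ => ?_
          have := hl (β j)
          rw [mul_one_div]
          gcongr
          exact hD j
      _ = ∑ i ∈ (Finset.univ.filter (fun j : Fin m => (β j : ℕ) < p)).image
            (fun j => (β j : ℕ)), 2 * M * (1 / l i) := by
          rw [Finset.sum_image]
          intro a _ b _ hab
          exact β.injective (Fin.ext hab)
      _ ≤ _ := by
          refine Finset.sum_le_sum_of_subset_of_nonneg ?_ ?_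
          · intro i hi
            simp only [Finset.mem_image, Finset.mem_filter] at hi
            obtain ⟨j, hj, rfl⟩ := hi
            simpa using hj.2
          · intro i _ _
            have := hl i
            positivity
  · by_cases hpm : p < m
    · have : NeZero m := ⟨by omega⟩
      refine le_trans ?_ (le_lamVar (fun n => l (n + p)) g x hx hK
        (β.trans (Equiv.subRight (⟨p, hpm⟩ : Fin m))))
      calc _ = ∑ j ∈ Finset.univ.filter (fun j : Fin m => ¬ (β j : ℕ) < p),
            ENNReal.ofReal (|g (x j.succ) - g (x j.castSucc)| /
              l (((β.trans (Equiv.subRight (⟨p, hpm⟩ : Fin m))) j : ℕ) + p)) := by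
            refine Finset.sum_congr rfl fun j hj => ?_
            simp only [Finset.mem_filter, not_lt] at hj
            have : (((β.trans (Equiv.subRight (⟨p, hpm⟩ : Fin m))) j : ℕ) + p) = β j := by
              simp only [Equiv.trans_apply, Equiv.subRight_apply]
              rw [Fin.sub_val_of_le (by exact hj.2)]
              simp only
              omega
            rw [this]
        _ ≤ _ := Finset.sum_le_sum_of_subset (Finset.filter_subset _ _)
    · rw [Finset.filter_false_of_mem]
      · simp
      · intro j _
        have := (β j).2
        omega

/-- Bernstein-type operator on sequences. -/
noncomputable def seqBern (n : ℕ) (F : ℕ → ℝ) (x : ℝ) : ℝ :=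
  ∑ k ∈ Finset.range (n + 1), (n.choose k : ℝ) * x ^ k * (1 - x) ^ (n - k) * F k

lemma seqBern_succ (n : ℕ) (F : ℕ → ℝ) (x : ℝ) :
    seqBern (n + 1) F x = x * seqBern n (fun k => F (k + 1)) x + (1 - x) * seqBern n F x := by
  unfold seqBern
  rw [Finset.sum_range_succ' _ (n + 1)]
  have h1 : ∀ k ∈ Finset.range (n + 1),
      ((n + 1).choose (k + 1) : ℝ) * x ^ (k + 1) * (1 - x) ^ (n + 1 - (k + 1)) * F (k + 1)
      = x * ((n.choose k : ℝ) * x ^ k * (1 - x) ^ (n - k) * F (k + 1))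
        + (n.choose (k + 1) : ℝ) * x ^ (k + 1) * (1 - x) ^ (n - k) * F (k + 1) := by
    intro k _
    rw [Nat.choose_succ_succ, Nat.add_sub_add_right]
    push_cast
    ring
  rw [Finset.sum_congr rfl h1, Finset.sum_add_distrib, ← Finset.mul_sum, add_assoc]
  congr 1
  have h2 : (1 - x) * ∑ k ∈ Finset.range (n + 1),
      (n.choose k : ℝ) * x ^ k * (1 - x) ^ (n - k) * F k
      = ∑ k ∈ Finset.range (n + 2), (n.choose k : ℝ) * x ^ k * (1 - x) ^ (n + 1 - k) * F k := by
    rw [Finset.sum_range_succ _ (n + 1), Finset.mul_sum]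
    simp only [Nat.choose_succ_self, Nat.cast_zero, zero_mul, add_zero]
    refine Finset.sum_congr rfl fun k hk => ?_
    have : n + 1 - k = (n - k) + 1 := by
      have := Finset.mem_range.1 hk
      omega
    rw [this]
    ring
  rw [h2, Finset.sum_range_succ' _ (n + 1)]
  simp

lemma seqBern_shift_integral (n : ℕ) (F : ℕ → ℝ) (c : ℕ) (x : ℝ) (hx : x ∈ Set.Icc (0:ℝ) 1) :
    IntervalIntegrable (fun u => seqBern n (fun k => F (k + (c + if u ≤ x then 1 else 0))) x)
      volume 0 1 ∧
    seqBern (n + 1) (fun k => F (k + c)) x =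
      ∫ u in (0:ℝ)..1, seqBern n (fun k => F (k + (c + if u ≤ x then 1 else 0))) x := by
  set A := seqBern n (fun k => F (k + (c + 1))) x with hA
  set B := seqBern n (fun k => F (k + c)) x with hB
  have h : (fun u => seqBern n (fun k => F (k + (c + if u ≤ x then 1 else 0))) x)
      = fun u => if u ≤ x then A else B := by
    funext u
    split_ifs <;> simp [hA, hB]
  rw [h]
  have i1 : IntervalIntegrable (fun u => if u ≤ x then A else B) volume 0 x := by
    refine (intervalIntegrable_const (c := A)).congr ?_
    intro u hu
    rw [Set.uIoc_of_le hx.1] at hu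
    simp [hu.2]
  have i2 : IntervalIntegrable (fun u => if u ≤ x then A else B) volume x 1 := by
    refine (intervalIntegrable_const (c := B)).congr ?_
    intro u hu
    rw [Set.uIoc_of_le hx.2] at hu
    simp [hu.1]
  refine ⟨i1.trans i2, ?_⟩
  rw [← intervalIntegral.integral_add_adjacent_intervals i1 i2]
  have e1 : ∫ u in (0:ℝ)..x, (if u ≤ x then A else B) = x * A := by
    rw [intervalIntegral.integral_congr_ae (g := fun _ => A)]
    · simp
    · refine Eventually.of_forall fun u hu => ?_
      rw [Set.uIoc_of_le hx.1] at hu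
      simp [hu.2]
  have e2 : ∫ u in x..1, (if u ≤ x then A else B) = (1 - x) * B := by
    rw [intervalIntegral.integral_congr_ae (g := fun _ => B)]
    · simp
    · refine Eventually.of_forall fun u hu => ?_
      rw [Set.uIoc_of_le hx.2] at hu
      simp [hu.1]
  rw [e1, e2, seqBern_succ]
  simp only [hA, hB]
  congr 3
  funext k
  congr 1
  ring

/-- averaging lemma -/
lemma avg_le {m : ℕ} (G : Fin (m + 1) → ℝ → ℝ) (w : Fin m → ℝ) (hw : ∀ j, 0 ≤ w j) (M : ℝ)
    (hG : ∀ j, IntervalIntegrable (G j) volume 0 1)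
    (h : ∀ u ∈ Set.Icc (0:ℝ) 1, ∑ j : Fin m, |G j.succ u - G j.castSucc u| * w j ≤ M) :
    ∑ j : Fin m, |(∫ u in (0:ℝ)..1, G j.succ u) - ∫ u in (0:ℝ)..1, G j.castSucc u| * w j ≤ M := by
  have hi : ∀ j : Fin m, IntervalIntegrable (fun u => |G j.succ u - G j.castSucc u| * w j)
      volume 0 1 := fun j => (((hG _).sub (hG _)).abs).mul_const _
  calc _ ≤ ∑ j : Fin m, ∫ u in (0:ℝ)..1, |G j.succ u - G j.castSucc u| * w j := by
        refine Finset.sum_le_sum fun j _ => ?_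
        rw [intervalIntegral.integral_mul_const, ← intervalIntegral.integral_sub (hG _) (hG _)]
        exact mul_le_mul_of_nonneg_right
          (intervalIntegral.abs_integral_le_integral_abs zero_le_one) (hw j)
    _ = ∫ u in (0:ℝ)..1, ∑ j : Fin m, |G j.succ u - G j.castSucc u| * w j := by
        rw [intervalIntegral.integral_finsetSum]
        intro j _
        exact hi j
    _ ≤ ∫ u in (0:ℝ)..1, M := by
        refine intervalIntegral.integral_mono_on zero_le_one ?_ (by simp) h
        have := IntervalIntegrable.sum Finset.univ (fun j _ => hi j)
        simpa [Finset.sum_fn] using this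
    _ = M := by simp

lemma seqBern_var {m : ℕ} (w : Fin m → ℝ) (hw : ∀ j, 0 ≤ w j) (F : ℕ → ℝ) (N : ℕ) (M : ℝ)
    (H : ∀ k : Fin (m + 1) → ℕ, Monotone k → (∀ j, k j ≤ N) →
      ∑ j : Fin m, |F (k j.succ) - F (k j.castSucc)| * w j ≤ M)
    (x : Fin (m + 1) → ℝ) (hx : Monotone x) (hK : ∀ j, x j ∈ Set.Icc (0:ℝ) 1) (n : ℕ) :
    ∀ c : Fin (m + 1) → ℕ, Monotone c → (∀ j, c j + n ≤ N) →
      ∑ j : Fin m, |seqBern n (fun k => F (k + c j.succ)) (x j.succ)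
        - seqBern n (fun k => F (k + c j.castSucc)) (x j.castSucc)| * w j ≤ M := by
  induction n with
  | zero =>
    intro c hc hN
    simpa [seqBern] using H c hc (fun j => by simpa using hN j)
  | succ n ih =>
    intro c hc hN
    have := avg_le
      (fun j u => seqBern n (fun k => F (k + (c j + if u ≤ x j then 1 else 0))) (x j)) w hw M
      (fun j => (seqBern_shift_integral n F (c j) (x j) (hK j)).1) ?_
    · simpa only [← (seqBern_shift_integral n F (c _) (x _) (hK _)).2] using this
    · intro u _
      refine ih (fun j => c j + if u ≤ x j then 1 else 0) ?_ ?_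
      · intro a b hab
        have h1 := hc hab
        have h2 := hx hab
        dsimp only
        split_ifs with h3 h4
        · omega
        · exact absurd (h3.trans h2) h4
        · omega
        · omega
      · intro j
        have := hN j
        split_ifs <;> omega

lemma kant_eq_seqBern (n : ℕ) (f : ℝ → ℝ) (x : ℝ) :
    kant n f x = seqBern n
      (fun k => (n + 1) * ∫ t in ((k : ℝ) / (n + 1))..(((k : ℝ) + 1) / (n + 1)), f t) x := rfl

lemma avg_eq (n k : ℕ) (f : ℝ → ℝ) :
    ((n : ℝ) + 1) * ∫ t in ((k : ℝ) / (n + 1))..(((k : ℝ) + 1) / (n + 1)), f t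
      = ∫ u in (0:ℝ)..1, f ((k + u) / (n + 1)) := by
  have hn : (n : ℝ) + 1 ≠ 0 := by positivity
  have := intervalIntegral.integral_comp_add_left (a := 0) (b := 1)
    (fun v => f (v / (n + 1))) (k : ℝ)
  rw [this, intervalIntegral.integral_comp_div (fun v => f v) hn]
  simp

lemma mem_cell {n k : ℕ} (hk : k ≤ n) {u : ℝ} (hu : u ∈ Set.Icc (0:ℝ) 1) :
    ((k : ℝ) + u) / (n + 1) ∈ Set.Icc (0:ℝ) 1 := by
  have : (k : ℝ) ≤ n := by exact_mod_cast hk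
  have h1 := hu.1
  have h2 := hu.2
  constructor
  · positivity
  · rw [div_le_one (by positivity)]
    linarith

lemma cell_integrable {n k : ℕ} (hk : k ≤ n) (f : ℝ → ℝ) (hf : ContinuousOn f (Set.Icc 0 1)) :
    IntervalIntegrable (fun u => f (((k : ℝ) + u) / (n + 1))) volume 0 1 := by
  apply ContinuousOn.intervalIntegrable
  rw [Set.uIcc_of_le zero_le_one]
  refine hf.comp (by fun_prop) (fun u hu => mem_cell hk hu)

lemma lamVar_kant_le (l : ℕ → ℝ) (hl : ∀ n, 0 < l n) (f : ℝ → ℝ)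
    (hf : ContinuousOn f (Set.Icc 0 1)) (hV : lamVar l f < ⊤) (n : ℕ) :
    lamVar l (kant n f) ≤ lamVar l f := by
  refine lamVar_le _ _ _ fun m x hx hK β => ?_
  have hbase : ∀ y : Fin (m + 1) → ℝ, Monotone y → (∀ j, y j ∈ Set.Icc (0:ℝ) 1) →
      ∑ j : Fin m, |f (y j.succ) - f (y j.castSucc)| * (1 / l (β j)) ≤ (lamVar l f).toReal := by
    intro y hy hyK
    have := le_lamVar l f y hy hyK β
    rw [← ENNReal.ofReal_sum_of_nonneg (fun j _ => by have := hl (β j); positivity)] at this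
    rw [← ENNReal.ofReal_le_iff_le_toReal hV.ne]
    simpa only [mul_one_div] using this
  have hw : ∀ j : Fin m, 0 ≤ 1 / l (β j) := fun j => by have := hl (β j); positivity
  have key := seqBern_var (fun j => 1 / l (β j)) hw
    (fun k => (n + 1) * ∫ t in ((k : ℝ) / (n + 1))..(((k : ℝ) + 1) / (n + 1)), f t) n
    (lamVar l f).toReal ?_ x hx hK n (fun _ => 0) (fun _ _ _ => le_rfl) (by simp)
  · rw [← ENNReal.ofReal_sum_of_nonneg (fun j _ => by have := hl (β j); positivity)]
    rw [ENNReal.ofReal_le_iff_le_toReal hV.ne]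
    simpa only [mul_one_div, add_zero, ← kant_eq_seqBern] using key
  · intro k hk hkn
    simp only [avg_eq]
    refine avg_le (fun j u => f (((k j : ℝ) + u) / (n + 1))) _ hw _
      (fun j => cell_integrable (hkn j) f hf) ?_
    intro u hu
    refine hbase (fun j => ((k j : ℝ) + u) / (n + 1)) ?_ (fun j => mem_cell (hkn j) hu)
    intro a b hab
    have : (k a : ℝ) ≤ k b := by exact_mod_cast hk hab
    dsimp only
    gcongr

lemma kant_contDiff (n : ℕ) (f : ℝ → ℝ) : ContDiff ℝ 1 (kant n f) := by
  unfold kant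
  fun_prop

lemma kant_lip (n : ℕ) (f : ℝ → ℝ) : ∃ C : ℝ, 0 ≤ C ∧
    ∀ x ∈ Set.Icc (0:ℝ) 1, ∀ y ∈ Set.Icc (0:ℝ) 1, |kant n f y - kant n f x| ≤ C * |y - x| := by
  have h := kant_contDiff n f
  have hc : Continuous (deriv (kant n f)) := h.continuous_deriv le_rfl
  obtain ⟨C, hC⟩ := (isCompact_Icc (a := (0:ℝ)) (b := 1)).exists_bound_of_continuousOn
    hc.continuousOn
  refine ⟨C, (norm_nonneg _).trans (hC 0 (by simp)), fun x hx y hy => ?_⟩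
  exact (convex_Icc (0:ℝ) 1).norm_image_sub_le_of_norm_deriv_le
    (fun z _ => (h.differentiable one_ne_zero) z) hC hx hy

lemma kant_uniform (f : ℝ → ℝ) (hf : ContinuousOn f (Set.Icc 0 1)) (ε : ℝ) (hε : 0 < ε) :
    ∀ᶠ n in atTop, ∀ x ∈ Set.Icc (0:ℝ) 1, |kant n f x - f x| ≤ ε := by
  let g : C(unitInterval, ℝ) := ⟨_, hf.domRestrict⟩
  have hB := bernsteinApproximation_uniform g
  have hB' := Metric.tendsto_nhds.1 hB (ε / 2) (by positivity)
  have huc := (isCompact_Icc (a := (0:ℝ)) (b := 1)).uniformContinuousOn_of_continuous hf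
  obtain ⟨δ, hδ, hd⟩ := Metric.uniformContinuousOn_iff.1 huc (ε / 2) (by positivity)
  have hsm : ∀ᶠ n : ℕ in atTop, 1 / ((n : ℝ) + 1) < δ :=
    tendsto_one_div_add_atTop_nhds_zero_nat.eventually (gt_mem_nhds hδ)
  filter_upwards [hB', hsm, eventually_ge_atTop 1] with n h1 h2 hn1 x hx
  have h3 : |bernsteinApproximation n g ⟨x, hx⟩ - f x| ≤ ε / 2 := by
    have := (ContinuousMap.dist_apply_le_dist (f := bernsteinApproximation n g) (g := g)
      ⟨x, hx⟩).trans h1.le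
    simpa [Real.dist_eq, g] using this
  have h4 : |kant n f x - bernsteinApproximation n g ⟨x, hx⟩| ≤ ε / 2 := by
    have hcell : ∀ k : Fin (n + 1),
        |(∫ u in (0:ℝ)..1, f (((k : ℕ) + u) / (n + 1))) - f ((k : ℕ) / n)| ≤ ε / 2 := by
      intro k
      have hkn : (k : ℕ) ≤ n := Nat.lt_succ_iff.1 k.2
      have hkn' : ((k : ℕ) : ℝ) ≤ n := by exact_mod_cast hkn
      have hn : (0:ℝ) < n := by exact_mod_cast hn1
      have e : (∫ u in (0:ℝ)..1, f (((k : ℕ) + u) / (n + 1))) - f ((k : ℕ) / n)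
          = ∫ u in (0:ℝ)..1, (f (((k : ℕ) + u) / (n + 1)) - f ((k : ℕ) / n)) := by
        rw [intervalIntegral.integral_sub (cell_integrable hkn f hf) (by simp)]
        simp
      rw [e]
      have := intervalIntegral.norm_integral_le_of_norm_le_const (a := (0:ℝ)) (b := 1)
        (f := fun u => f (((k : ℕ) + u) / (n + 1)) - f ((k : ℕ) / n)) (C := ε / 2) ?_
      · simpa using this
      · intro u hu
        rw [Set.uIoc_of_le zero_le_one] at hu
        have hu' : u ∈ Set.Icc (0:ℝ) 1 := ⟨hu.1.le, hu.2⟩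
        refine (hd _ (mem_cell hkn hu') _ ?_ ?_).le
        · exact ⟨by positivity, (div_le_one hn).2 hkn'⟩
        · refine lt_of_le_of_lt ?_ h2
          rw [Real.dist_eq, div_sub_div _ _ (by positivity) (by positivity), abs_div,
            abs_of_pos (by positivity : (0:ℝ) < (n + 1) * n), div_le_div_iff₀ (by positivity)
            (by positivity)]
          have hk0 : (0:ℝ) ≤ ((k : ℕ) : ℝ) := by positivity
          have : |(((k : ℕ) : ℝ) + u) * n - (n + 1) * (k : ℕ)| ≤ n := by
            rw [abs_le]
            constructor <;> nlinarith [hu.1, hu.2]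
          nlinarith
    have e1 : kant n f x = ∑ k : Fin (n + 1), bernstein n k ⟨x, hx⟩ *
        ∫ u in (0:ℝ)..1, f (((k : ℕ) + u) / (n + 1)) := by
      unfold kant
      simp only [avg_eq]
      rw [Finset.sum_range]
      simp [bernstein_apply]
    have e2 : bernsteinApproximation n g ⟨x, hx⟩ = ∑ k : Fin (n + 1), bernstein n k ⟨x, hx⟩ *
        f ((k : ℕ) / n) := by
      rw [bernsteinApproximation.apply]
      simp [g, bernstein.z, mul_comm]
    rw [e1, e2, ← Finset.sum_sub_distrib]
    calc _ ≤ ∑ k : Fin (n + 1), bernstein n k ⟨x, hx⟩ * (ε / 2) := by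
          refine (Finset.abs_sum_le_sum_abs _ _).trans (Finset.sum_le_sum fun k _ => ?_)
          rw [← mul_sub, abs_mul, abs_of_nonneg bernstein_nonneg]
          exact mul_le_mul_of_nonneg_left (hcell k) bernstein_nonneg
      _ = ε / 2 := by
          rw [← Finset.sum_mul, bernstein.probability, one_mul]
  have := abs_sub_le (kant n f x) (bernsteinApproximation n g ⟨x, hx⟩) (f x)
  linarith

/-- If `Λ` is a proper Λ-sequence and `f : [0,1] → ℝ` is Lebesgue-integrable,
then `‖K_n f - f‖_Λ → 0` if and only if `f` is continuous, of bounded Λ-variation, and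
continuous in Λ-variation. -/
theorem kantorovich_lamNorm_convergence_iff (l : ℕ → ℝ) (hl : IsProperLambdaSeq l)
    (f : ℝ → ℝ) (hint : IntegrableOn f (Set.Icc 0 1) volume) :
    Tendsto (fun n => lamNorm l (fun x => kant n f x - f x)) atTop (𝓝 0) ↔
      (ContinuousOn f (Set.Icc 0 1) ∧ lamVar l f < ⊤ ∧ ContInLamVar l f) := by
  obtain ⟨⟨hmono, hpos, -⟩, htop⟩ := hl
  constructor
  · intro h
    have hn0 : ∀ ε : ℝ≥0∞, 0 < ε → ∃ N, ∀ n ≥ N,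
        lamNorm l (fun x => kant n f x - f x) < ε := fun ε hε =>
      eventually_atTop.1 (h.eventually (gt_mem_nhds hε))
    have tri : ∀ n (l' : ℕ → ℝ), (∀ i, 0 < l' i) → lamVar l' f ≤
        lamVar l' (fun x => kant n f x - f x) + lamVar l' (kant n f) := by
      intro n l' hl'
      refine lamVar_le_add l' hl' _ _ _ fun x _ y _ => ?_
      have := abs_sub (kant n f y - kant n f x)
        ((kant n f y - f y) - (kant n f x - f x))
      have e : kant n f y - kant n f x - ((kant n f y - f y) - (kant n f x - f x))
        = f y - f x := by ring
      rw [e] at this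
      linarith
    refine ⟨?_, ?_, ?_⟩
    · refine continuousOn_of_uniform_approx_of_continuousOn (s := Set.Icc (0:ℝ) 1) ?_
      intro u hu
      obtain ⟨ε, hε, hεu⟩ := Metric.mem_uniformity_dist.1 hu
      have h0 := hpos 0
      obtain ⟨N, hN⟩ := hn0 (ENNReal.ofReal (min (ε / 2) (ε / (2 * l 0))))
        (ENNReal.ofReal_pos.2 (by positivity))
      refine ⟨kant N f, (kant_contDiff N f).continuous.continuousOn, fun y hy => hεu ?_⟩
      have h1 := hN N le_rfl
      have h2 : ENNReal.ofReal |kant N f 0 - f 0| < ENNReal.ofReal (ε / 2) :=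
        lt_of_le_of_lt le_add_self (h1.trans_le (ENNReal.ofReal_le_ofReal (min_le_left _ _)))
      have h3 : ENNReal.ofReal (|(kant N f y - f y) - (kant N f 0 - f 0)| / l 0)
          < ENNReal.ofReal (ε / (2 * l 0)) :=
        lt_of_le_of_lt ((abs_le_lamVar l hpos (fun x => kant N f x - f x) y hy).trans
          le_self_add) (h1.trans_le (ENNReal.ofReal_le_ofReal (min_le_right _ _)))
      rw [ENNReal.ofReal_lt_ofReal_iff (by positivity)] at h2 h3
      rw [div_lt_div_iff₀ h0 (by positivity)] at h3
      have h4 : |(kant N f y - f y) - (kant N f 0 - f 0)| < ε / 2 := by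
        nlinarith
      rw [Real.dist_eq, abs_sub_comm]
      have := abs_add_le ((kant N f y - f y) - (kant N f 0 - f 0)) (kant N f 0 - f 0)
      rw [sub_add_cancel] at this
      linarith
    · obtain ⟨N, hN⟩ := hn0 1 one_pos
      obtain ⟨C, hC, hlip⟩ := kant_lip N f
      refine lt_of_le_of_lt (tri N l hpos) (ENNReal.add_lt_top.2 ⟨?_, ?_⟩)
      · exact lt_of_le_of_lt le_self_add ((hN N le_rfl).trans ENNReal.one_lt_top)
      · exact lt_of_le_of_lt (lamVar_lip l hmono hpos _ C hC hlip) ENNReal.ofReal_lt_top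
    · unfold ContInLamVar
      rw [ENNReal.tendsto_nhds_zero]
      intro ε hε
      obtain ⟨N, hN⟩ := hn0 (ε / 2) (ENNReal.half_pos hε.ne')
      obtain ⟨C, hC, hlip⟩ := kant_lip N f
      have ht : Tendsto (fun m => ENNReal.ofReal (C / l m)) atTop (𝓝 0) := by
        have := ENNReal.tendsto_ofReal (htop.const_div_atTop C)
        simpa using this
      filter_upwards [ht.eventually (gt_mem_nhds (ENNReal.half_pos hε.ne'))] with m hm
      have hm2 := lamVar_lip (fun n => l (n + m)) (fun a b hab => hmono (by omega))
        (fun n => hpos _) _ C hC hlip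
      simp only [zero_add] at hm2
      have hm3 := lamVar_anti l (fun n => l (n + m)) hpos (fun n => hmono (by omega))
        (fun x => kant N f x - f x)
      calc _ ≤ _ := tri N _ (fun n => hpos _)
        _ ≤ ε / 2 + ε / 2 := by
            refine add_le_add (hm3.trans (le_trans le_self_add (hN N le_rfl).le))
              (hm2.trans hm.le)
        _ = ε := ENNReal.add_halves ε
  · rintro ⟨hc, hV, hcont⟩
    rw [ENNReal.tendsto_nhds_zero]
    intro ε hε
    have h4 : 0 < ε / 4 := ENNReal.div_pos hε.ne' (by norm_num)
    obtain ⟨p, hp⟩ := (hcont.eventually (gt_mem_nhds h4)).exists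
    -- choose uniform error
    set S := ∑ i ∈ Finset.range p, 1 / l i with hS
    have ht : Tendsto (fun η : ℝ => ENNReal.ofReal (2 * η * S)) (𝓝[>] 0) (𝓝 0) := by
      have : Continuous (fun η : ℝ => ENNReal.ofReal (2 * η * S)) :=
        ENNReal.continuous_ofReal.comp (by fun_prop)
      have := (this.tendsto 0).mono_left (nhdsWithin_le_nhds (s := Set.Ioi 0))
      simpa using this
    have ht2 : Tendsto (fun η : ℝ => ENNReal.ofReal η) (𝓝[>] 0) (𝓝 0) := by
      have := (ENNReal.continuous_ofReal.tendsto 0).mono_left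
        (nhdsWithin_le_nhds (s := Set.Ioi 0))
      simpa using this
    obtain ⟨η, ⟨hη1, hη2⟩, hη⟩ := (((ht.eventually (gt_mem_nhds h4)).and
      (ht2.eventually (gt_mem_nhds h4))).and self_mem_nhdsWithin).exists
    filter_upwards [kant_uniform f hc η hη] with n hn
    have hlp : ∀ i, 0 < (fun n => l (n + p)) i := fun i => hpos _
    have hVp : lamVar (fun n => l (n + p)) f < ⊤ := hp.trans_le le_top
    have s1 := lamVar_split l hpos (fun x => kant n f x - f x) η hn p
    have s2 : lamVar (fun n => l (n + p)) (fun x => kant n f x - f x) ≤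
        lamVar (fun n => l (n + p)) (kant n f) + lamVar (fun n => l (n + p)) f := by
      refine lamVar_le_add _ hlp _ _ _ fun x _ y _ => ?_
      have := abs_sub (kant n f y - kant n f x) (f y - f x)
      rwa [show kant n f y - kant n f x - (f y - f x)
        = kant n f y - f y - (kant n f x - f x) by ring] at this
    have s3 := lamVar_kant_le (fun n => l (n + p)) hlp f hc hVp n
    have s4 : ENNReal.ofReal |kant n f 0 - f 0| ≤ ε / 4 :=
      (ENNReal.ofReal_le_ofReal (hn 0 (by simp))).trans hη2.le
    calc lamNorm l (fun x => kant n f x - f x)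
        ≤ (ε / 4 + (ε / 4 + ε / 4)) + ε / 4 := by
          unfold lamNorm
          refine add_le_add (s1.trans (add_le_add hη1.le (s2.trans
            (add_le_add (s3.trans hp.le) hp.le)))) s4
      _ = ε := by
          have : ε / 4 = ε / 2 / 2 := by
            rw [ENNReal.div_eq_inv_mul, ENNReal.div_eq_inv_mul, ENNReal.div_eq_inv_mul,
              ← mul_assoc, ← ENNReal.mul_inv (by simp) (by simp)]
            norm_num
          have e : (ε / 4 + (ε / 4 + ε / 4)) + ε / 4 = (ε / 4 + ε / 4) + (ε / 4 + ε / 4) := by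
            ring
          rw [e, this, ENNReal.add_halves, ENNReal.add_halves]
end

section
/- Let Λ be a proper Λ-sequence and let K ⊆ CΛBV_c be a set of functions that is bounded (sup_{f∈K} ‖f‖_Λ < ∞) and closed under ‖·‖_Λ-convergence (if f_k ∈ K, g is of bounded Λ-variation and ‖f_k − g‖_Λ → 0, then g ∈ K). Then K is compact in the ‖·‖_Λ norm — i.e., every sequence in K has a subsequence converging in ‖·‖_Λ to an element of K — if and only if ‖B_nf − f‖_Λ → 0 as n → ∞ uniformly in f ∈ K, i.e. sup_{f∈K} ‖B_nf − f‖_Λ → 0. -/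
open Filter Set MeasureTheory
open scoped ENNReal Topology

namespace BernAux

/-- Recursive form of the Bernstein operator. -/
noncomputable def T : ℕ → (ℕ → ℝ) → ℝ → ℝ
  | 0, G, _ => G 0
  | n + 1, G, x => x * T n (fun k => G (k + 1)) x + (1 - x) * T n G x

lemma T_eq (n : ℕ) (G : ℕ → ℝ) (x : ℝ) :
    T n G x = ∑ ij ∈ Finset.HasAntidiagonal.antidiagonal n,
      (n.choose ij.1 : ℝ) * (G ij.1 * x ^ ij.1 * (1 - x) ^ ij.2) := by
  induction n generalizing G with
  | zero => simp [T]
  | succ n ih =>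
    rw [Finset.sum_antidiagonal_choose_succ_mul
      (fun i j => G i * x ^ i * (1 - x) ^ j) n, T, ih, ih, add_comm, Finset.mul_sum,
      Finset.mul_sum]
    congr 1
    · refine Finset.sum_congr rfl fun ij _ => ?_
      ring
    · refine Finset.sum_congr rfl fun ij hij => ?_
      rw [Nat.choose_symm_of_eq_add (Finset.HasAntidiagonal.mem_antidiagonal.1 hij).symm]
      ring

lemma bern_eq_T (n : ℕ) (f : ℝ → ℝ) (x : ℝ) :
    bern n f x = T n (fun k => f ((k : ℝ) / n)) x := by
  rw [T_eq, Finset.Nat.sum_antidiagonal_eq_sum_range_succ_mk, bern]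
  refine Finset.sum_congr rfl fun k _ => ?_
  ring

lemma T_zero (n : ℕ) (G : ℕ → ℝ) : T n G 0 = G 0 := by
  induction n generalizing G with
  | zero => simp [T]
  | succ n ih => simp [T, ih]

lemma bern_zero (n : ℕ) (f : ℝ → ℝ) : bern n f 0 = f 0 := by
  rw [bern_eq_T, T_zero]; simp

/-- Partition points extended by `0` and `1`. -/
noncomputable def ext (m : ℕ) (x : Fin (m + 1) → ℝ) (k : ℕ) : ℝ :=
  if k = 0 then 0 else if h : k - 1 < m + 1 then x ⟨k - 1, h⟩ else 1

lemma ext_mono (m : ℕ) (x : Fin (m + 1) → ℝ) (hx : Monotone x) (hI : ∀ j, x j ∈ Set.Icc (0:ℝ) 1) :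
    Monotone (ext m x) := by
  refine monotone_nat_of_le_succ fun k => ?_
  unfold ext
  rcases Nat.eq_zero_or_pos k with rfl | hk
  · simp [(hI _).1]
  · have hk0 : k ≠ 0 := hk.ne'
    simp only [hk0, if_false, Nat.succ_ne_zero, Nat.add_sub_cancel]
    split_ifs with h1 h2 h2
    · exact hx (by simp [Fin.le_def])
    · exact (hI _).2
    · omega
    · exact le_rfl

lemma coupling (m : ℕ) (x : Fin (m + 1) → ℝ) (hx : Monotone x)
    (hI : ∀ j, x j ∈ Set.Icc (0:ℝ) 1) (C : Set (Fin (m + 1) → ℝ)) (hC : Convex ℝ C)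
    (n : ℕ) (F : Fin (m + 1) → ℕ → ℝ)
    (hF : ∀ s : Fin (m + 1) → ℕ, Monotone s → (∀ j, s j ≤ n) → (fun j => F j (s j)) ∈ C) :
    (fun j => T n (F j) (x j)) ∈ C := by
  induction n generalizing F with
  | zero => exact hF (fun _ => 0) monotone_const (fun _ => le_rfl)
  | succ n ih =>
    have hm := ext_mono m x hx hI
    have key := hC.sum_mem (t := Finset.range (m + 2))
      (w := fun c => ext m x (c + 1) - ext m x c)
      (z := fun c => fun j => T n (fun k => F j (k + if c ≤ (j : ℕ) then 1 else 0)) (x j))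
      (fun c _ => sub_nonneg.2 (hm (Nat.le_succ c)))
      (by rw [Finset.sum_range_sub]; simp [ext])
      (by
        intro c _
        refine ih _ fun s hs hsn => ?_
        refine hF (fun j => s j + if c ≤ (j : ℕ) then 1 else 0) ?_ ?_
        · intro a b hab
          have h1 := hs hab
          have h2 : (a : ℕ) ≤ b := hab
          show s a + _ ≤ s b + _
          split_ifs <;> omega
        · intro j
          have := hsn j
          show s j + _ ≤ _
          split_ifs <;> omega)
    convert key using 1
    ext j
    rw [Finset.sum_apply]
    simp only [Pi.smul_apply, smul_eq_mul, T]
    have hj : (j : ℕ) + 1 ≤ m + 2 := by omega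
    rw [← Finset.sum_range_add_sum_Ico _ hj]
    have e1 : ∑ c ∈ Finset.range ((j : ℕ) + 1), (ext m x (c + 1) - ext m x c) *
        T n (fun k => F j (k + if c ≤ (j : ℕ) then 1 else 0)) (x j)
        = x j * T n (fun k => F j (k + 1)) (x j) := by
      have : x j = ∑ c ∈ Finset.range ((j : ℕ) + 1), (ext m x (c + 1) - ext m x c) := by
        rw [Finset.sum_range_sub]; simp [ext, j.is_le.not_gt]
      conv_rhs => rw [this, Finset.sum_mul]
      rw [← this]
      refine Finset.sum_congr rfl fun c hc => ?_
      have : c ≤ (j : ℕ) := by simpa [Nat.lt_succ_iff] using hc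
      simp [this]
    have e2 : ∑ c ∈ Finset.Ico ((j : ℕ) + 1) (m + 2), (ext m x (c + 1) - ext m x c) *
        T n (fun k => F j (k + if c ≤ (j : ℕ) then 1 else 0)) (x j)
        = (1 - x j) * T n (F j) (x j) := by
      have : 1 - x j = ∑ c ∈ Finset.Ico ((j : ℕ) + 1) (m + 2), (ext m x (c + 1) - ext m x c) := by
        rw [Finset.sum_Ico_eq_sub _ hj, Finset.sum_range_sub, Finset.sum_range_sub]
        simp [ext, j.is_le.not_gt]
      rw [this, Finset.sum_mul]
      refine Finset.sum_congr rfl fun c hc => ?_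
      have : ¬ c ≤ (j : ℕ) := by have := (Finset.mem_Ico.1 hc).1; omega
      simp [this]
    rw [e1, e2]

lemma sum_le_lamVar (l : ℕ → ℝ) (f : ℝ → ℝ) (m : ℕ) (x : Fin (m + 1) → ℝ) (hx : Monotone x)
    (hI : ∀ j, x j ∈ Set.Icc (0:ℝ) 1) (β : Equiv.Perm (Fin m)) :
    ∑ j : Fin m, ENNReal.ofReal (|f (x j.succ) - f (x j.castSucc)| / l (β j)) ≤ lamVar l f := by
  unfold lamVar lamVarOn
  exact le_iSup_of_le m <| le_iSup_of_le x <| le_iSup_of_le hx <| le_iSup_of_le hI <|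
    le_iSup_of_le β le_rfl

lemma lamVar_le (l : ℕ → ℝ) (f : ℝ → ℝ) (B : ℝ≥0∞)
    (h : ∀ (m : ℕ) (x : Fin (m + 1) → ℝ), Monotone x → (∀ j, x j ∈ Set.Icc (0:ℝ) 1) →
      ∀ β : Equiv.Perm (Fin m),
      ∑ j : Fin m, ENNReal.ofReal (|f (x j.succ) - f (x j.castSucc)| / l (β j)) ≤ B) :
    lamVar l f ≤ B := by
  unfold lamVar lamVarOn
  exact iSup_le fun m => iSup_le fun x => iSup_le fun hx => iSup_le fun hI => iSup_le fun β =>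
    h m x hx hI β

lemma lamVar_bern_le (l : ℕ → ℝ) (hl : ∀ n, 0 < l n) (n : ℕ) (f : ℝ → ℝ) :
    lamVar l (bern n f) ≤ lamVar l f := by
  by_cases htop : lamVar l f = ⊤
  · rw [htop]; exact le_top
  refine lamVar_le _ _ _ fun m x hx hI β => ?_
  set C : Set (Fin (m + 1) → ℝ) :=
    {v | ∑ j : Fin m, |v j.succ - v j.castSucc| / l (β j) ≤ (lamVar l f).toReal} with hCdef
  have hC : Convex ℝ C := by
    intro v hv w hw a b ha hb hab
    simp only [hCdef, Set.mem_ofPred_eq] at hv hw ⊢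
    calc ∑ j : Fin m, |(a • v + b • w) j.succ - (a • v + b • w) j.castSucc| / l (β j)
        ≤ ∑ j : Fin m, (a * (|v j.succ - v j.castSucc| / l (β j)) +
            b * (|w j.succ - w j.castSucc| / l (β j))) := by
          refine Finset.sum_le_sum fun j _ => ?_
          rw [mul_div_assoc', mul_div_assoc', ← add_div]
          refine div_le_div_of_nonneg_right ?_ (hl _).le
          simp only [Pi.add_apply, Pi.smul_apply, smul_eq_mul]
          calc _ = |a * (v j.succ - v j.castSucc) + b * (w j.succ - w j.castSucc)| := by
                congr 1; ring
            _ ≤ _ := (abs_add_le _ _).trans (by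
                rw [abs_mul, abs_mul, abs_of_nonneg ha, abs_of_nonneg hb])
      _ = a * ∑ j : Fin m, |v j.succ - v j.castSucc| / l (β j) +
            b * ∑ j : Fin m, |w j.succ - w j.castSucc| / l (β j) := by
          rw [Finset.sum_add_distrib, Finset.mul_sum, Finset.mul_sum]
      _ ≤ a * (lamVar l f).toReal + b * (lamVar l f).toReal := by gcongr
      _ = (lamVar l f).toReal := by rw [← add_mul, hab, one_mul]
  have key := coupling m x hx hI C hC n (fun _ k => f ((k : ℝ) / n)) (by
    intro s hs hsn
    simp only [hCdef, Set.mem_ofPred_eq]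
    have := sum_le_lamVar l f m (fun j => (s j : ℝ) / n)
      (fun a b hab => by
        have : (s a : ℝ) ≤ s b := by exact_mod_cast hs hab
        dsimp only
        gcongr)
      (fun j => ⟨by positivity, div_le_one_of_le₀ (by exact_mod_cast hsn j) (by positivity)⟩) β
    rw [← ENNReal.ofReal_sum_of_nonneg
      (fun j _ => div_nonneg (abs_nonneg _) (hl _).le)] at this
    exact (ENNReal.ofReal_le_iff_le_toReal htop).1 this)
  simp only [hCdef, Set.mem_ofPred_eq, ← bern_eq_T] at key
  rw [← ENNReal.ofReal_sum_of_nonneg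
      (fun j _ => div_nonneg (abs_nonneg _) (hl _).le)]
  exact (ENNReal.ofReal_le_iff_le_toReal htop).2 key

lemma lamNorm_bern_le (l : ℕ → ℝ) (hl : ∀ n, 0 < l n) (n : ℕ) (f : ℝ → ℝ) :
    lamNorm l (bern n f) ≤ lamNorm l f := by
  unfold lamNorm
  rw [bern_zero]
  gcongr
  exact lamVar_bern_le l hl n f

lemma lamVar_le_add (l : ℕ → ℝ) (hl : ∀ n, 0 < l n) (f g h : ℝ → ℝ)
    (H : ∀ x y, |h x - h y| ≤ |f x - f y| + |g x - g y|) :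
    lamVar l h ≤ lamVar l f + lamVar l g := by
  refine lamVar_le _ _ _ fun m x hx hI β => ?_
  refine le_trans ?_ (add_le_add (sum_le_lamVar l f m x hx hI β) (sum_le_lamVar l g m x hx hI β))
  rw [← Finset.sum_add_distrib]
  refine Finset.sum_le_sum fun j _ => ?_
  rw [← ENNReal.ofReal_add (div_nonneg (abs_nonneg _) (hl _).le)
    (div_nonneg (abs_nonneg _) (hl _).le), ← add_div]
  exact ENNReal.ofReal_le_ofReal (div_le_div_of_nonneg_right (H _ _) (hl _).le)

lemma lamNorm_tri (l : ℕ → ℝ) (hl : ∀ n, 0 < l n) (f g h : ℝ → ℝ) :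
    lamNorm l (fun x => f x - h x) ≤
      lamNorm l (fun x => f x - g x) + lamNorm l (fun x => g x - h x) := by
  have h1 := lamVar_le_add l hl (fun x => f x - g x) (fun x => g x - h x) (fun x => f x - h x)
    (fun x y => by
      refine le_trans (le_of_eq ?_) (abs_add_le _ _)
      congr 1; ring)
  have h2 : ENNReal.ofReal |f 0 - h 0| ≤
      ENNReal.ofReal |f 0 - g 0| + ENNReal.ofReal |g 0 - h 0| := by
    rw [← ENNReal.ofReal_add (abs_nonneg _) (abs_nonneg _)]
    exact ENNReal.ofReal_le_ofReal (abs_sub_le _ _ _)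
  unfold lamNorm
  calc _ ≤ _ := add_le_add h1 h2
    _ = _ := by ring

lemma lamNorm_comm (l : ℕ → ℝ) (f g : ℝ → ℝ) :
    lamNorm l (fun x => f x - g x) = lamNorm l (fun x => g x - f x) := by
  unfold lamNorm lamVar lamVarOn
  have : ∀ x y, |f x - g x - (f y - g y)| = |g x - f x - (g y - f y)| := fun x y => by
    rw [← abs_neg]; congr 1; ring
  simp only [this, abs_sub_comm (f 0) (g 0)]

lemma bern_sub (n : ℕ) (f g : ℝ → ℝ) (x : ℝ) :
    bern n f x - bern n g x = bern n (fun y => f y - g y) x := by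
  unfold bern
  rw [← Finset.sum_sub_distrib]
  exact Finset.sum_congr rfl fun k _ => by ring

/-- sup bound -/
lemma abs_sub_le_lamVar (l : ℕ → ℝ) (hl : ∀ n, 0 < l n) (f : ℝ → ℝ) (x : ℝ)
    (hx : x ∈ Set.Icc (0:ℝ) 1) :
    ENNReal.ofReal |f x - f 0| ≤ ENNReal.ofReal (l 0) * lamVar l f := by
  have := sum_le_lamVar l f 1 ![0, x] (by
    intro a b hab
    fin_cases a <;> fin_cases b <;> simp_all) (by
    intro j; fin_cases j <;> simp [hx.1, hx.2]) (Equiv.refl _)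
  simp at this
  calc ENNReal.ofReal |f x - f 0| = ENNReal.ofReal (l 0 * (|f x - f 0| / l 0)) := by
        rw [mul_div_cancel₀ _ (hl 0).ne']
    _ = ENNReal.ofReal (l 0) * ENNReal.ofReal (|f x - f 0| / l 0) :=
        ENNReal.ofReal_mul (hl 0).le
    _ ≤ _ := by gcongr

lemma abs_le_lamNorm (l : ℕ → ℝ) (hl : ∀ n, 0 < l n) (f : ℝ → ℝ) (x : ℝ)
    (hx : x ∈ Set.Icc (0:ℝ) 1) :
    ENNReal.ofReal |f x| ≤ ENNReal.ofReal (l 0 + 1) * lamNorm l f := by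
  have h1 := abs_sub_le_lamVar l hl f x hx
  have h2 : ENNReal.ofReal |f x| ≤ ENNReal.ofReal |f x - f 0| + ENNReal.ofReal |f 0| := by
    rw [← ENNReal.ofReal_add (abs_nonneg _) (abs_nonneg _)]
    exact ENNReal.ofReal_le_ofReal (by simpa using abs_add_le (f x - f 0) (f 0))
  refine h2.trans ?_
  unfold lamNorm
  rw [ENNReal.ofReal_add (hl 0).le zero_le_one, ENNReal.ofReal_one, add_mul, one_mul]
  refine add_le_add (h1.trans ?_) le_add_self
  gcongr
  exact le_self_add

lemma lamVar_lsc (l : ℕ → ℝ) (H : ℕ → ℝ → ℝ) (h : ℝ → ℝ) (B : ℝ≥0∞)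
    (hlim : ∀ x ∈ Set.Icc (0:ℝ) 1, Tendsto (fun j => H j x) atTop (𝓝 (h x)))
    (hB : ∀ᶠ j in atTop, lamVar l (H j) ≤ B) : lamVar l h ≤ B := by
  refine lamVar_le _ _ _ fun m x hx hI β => ?_
  refine le_of_tendsto (f := fun i => ∑ j : Fin m,
    ENNReal.ofReal (|H i (x j.succ) - H i (x j.castSucc)| / l (β j))) (x := atTop) ?_ ?_
  · refine tendsto_finsetSum _ fun j _ => ?_
    refine ENNReal.tendsto_ofReal ?_
    exact (((hlim _ (hI _)).sub (hlim _ (hI _))).abs).div_const _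
  · filter_upwards [hB] with i hi
    exact (sum_le_lamVar l (H i) m x hx hI β).trans hi

lemma lamVar_lip (l : ℕ → ℝ) (hl : IsLambdaSeq l) (f : ℝ → ℝ) (L : ℝ)
    (hL : 0 ≤ L) (hf : ∀ x ∈ Set.Icc (0:ℝ) 1, ∀ y ∈ Set.Icc (0:ℝ) 1, |f x - f y| ≤ L * |x - y|) :
    lamVar l f < ⊤ := by
  refine lt_of_le_of_lt (b := ENNReal.ofReal (L / l 0)) ?_ ENNReal.ofReal_lt_top
  refine lamVar_le _ _ _ fun m x hx hI β => ?_
  rw [← ENNReal.ofReal_sum_of_nonneg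
      (fun j _ => div_nonneg (abs_nonneg _) (hl.2.1 _).le)]
  refine ENNReal.ofReal_le_ofReal ?_
  have h0 := hl.2.1 0
  have tel : ∑ j : Fin m, (x j.succ - x j.castSucc) = x (Fin.last m) - x 0 := by
    rw [Finset.sum_sub_distrib]
    have a := Fin.sum_univ_succ x
    have b := Fin.sum_univ_castSucc x
    linarith
  calc ∑ j : Fin m, |f (x j.succ) - f (x j.castSucc)| / l (β j)
      ≤ ∑ j : Fin m, L / l 0 * (x j.succ - x j.castSucc) := by
        refine Finset.sum_le_sum fun j _ => ?_
        have hmono : x j.castSucc ≤ x j.succ := hx (Fin.castSucc_lt_succ).le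
        have := hf _ (hI j.succ) _ (hI j.castSucc)
        rw [abs_of_nonneg (sub_nonneg.2 hmono)] at this
        calc _ ≤ L * (x j.succ - x j.castSucc) / l 0 :=
              div_le_div₀ (mul_nonneg hL (sub_nonneg.2 hmono)) this h0 (hl.1 (Nat.zero_le _))
          _ = _ := by ring
    _ = L / l 0 * (x (Fin.last m) - x 0) := by rw [← Finset.mul_sum, tel]
    _ ≤ L / l 0 * 1 := by
        have := (hI (Fin.last m)).2
        have := (hI 0).1
        gcongr
        linarith
    _ = _ := mul_one _

lemma lamNorm_poly (l : ℕ → ℝ) (hl : IsLambdaSeq l) (c : ℝ) (k j : ℕ) :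
    lamNorm l (fun x => c * x ^ k * (1 - x) ^ j) < ⊤ := by
  have hc : ContDiff ℝ 1 (fun x : ℝ => c * x ^ k * (1 - x) ^ j) := by fun_prop
  obtain ⟨L, hL⟩ := hc.locallyLipschitz.locallyLipschitzOn.exists_lipschitzOnWith_of_compact
    (isCompact_Icc (a := (0:ℝ)) (b := 1))
  refine ENNReal.add_lt_top.2 ⟨lamVar_lip l hl _ L L.2 fun x hx y hy => ?_, ENNReal.ofReal_lt_top⟩
  simpa [Real.dist_eq] using hL.dist_le_mul x hx y hy

lemma lamVar_const_mul (l : ℕ → ℝ) (c : ℝ) (f : ℝ → ℝ) :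
    lamVar l (fun x => c * f x) ≤ ENNReal.ofReal |c| * lamVar l f := by
  refine lamVar_le _ _ _ fun m x hx hI β => ?_
  refine le_trans (le_of_eq ?_) (mul_le_mul_right (sum_le_lamVar l f m x hx hI β) _)
  rw [Finset.mul_sum]
  refine Finset.sum_congr rfl fun j _ => ?_
  rw [← ENNReal.ofReal_mul (abs_nonneg _), ← mul_sub, abs_mul, mul_div_assoc]

lemma lamNorm_const_mul (l : ℕ → ℝ) (c : ℝ) (f : ℝ → ℝ) :
    lamNorm l (fun x => c * f x) ≤ ENNReal.ofReal |c| * lamNorm l f := by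
  unfold lamNorm
  rw [mul_add, ← ENNReal.ofReal_mul (abs_nonneg _), ← abs_mul]
  gcongr
  exact lamVar_const_mul l c f

lemma lamNorm_zero (l : ℕ → ℝ) : lamNorm l (fun _ => 0) = 0 := by
  have : lamVar l (fun _ => 0) ≤ 0 := lamVar_le _ _ _ fun m x hx hI β => by simp
  simp [lamNorm, le_antisymm this bot_le]

lemma lamNorm_add (l : ℕ → ℝ) (hl : ∀ n, 0 < l n) (f g : ℝ → ℝ) :
    lamNorm l (fun x => f x + g x) ≤ lamNorm l f + lamNorm l g := by
  have := lamNorm_tri l hl f (fun _ => 0) (fun x => - g x)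
  have h2 := lamNorm_comm l (fun _ => 0) (fun x => - g x)
  rw [h2] at this
  have h3 := lamNorm_const_mul l (-1) g
  simp at this h3
  exact this.trans (by gcongr)

lemma lamNorm_sum (l : ℕ → ℝ) (hl : ∀ n, 0 < l n) (s : Finset ℕ) (f : ℕ → ℝ → ℝ) :
    lamNorm l (fun x => ∑ k ∈ s, f k x) ≤ ∑ k ∈ s, lamNorm l (f k) := by
  classical
  induction s using Finset.induction_on with
  | empty => simp [lamNorm_zero]
  | insert a s ha ih =>
    simp only [Finset.sum_insert ha]
    exact (lamNorm_add l hl _ _).trans (by gcongr)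

lemma lamNorm_bern_fin (l : ℕ → ℝ) (hl : IsLambdaSeq l) (n : ℕ) (h : ℝ → ℝ) :
    lamNorm l (bern n h) ≤ ∑ k ∈ Finset.range (n + 1), ENNReal.ofReal |h ((k : ℝ) / n)| *
      lamNorm l (fun x => (n.choose k : ℝ) * x ^ k * (1 - x) ^ (n - k)) := by
  have := lamNorm_sum l hl.2.1 (Finset.range (n + 1)) (fun k x =>
    h ((k : ℝ) / n) * ((n.choose k : ℝ) * x ^ k * (1 - x) ^ (n - k)))
  have e : bern n h = fun x => ∑ k ∈ Finset.range (n + 1),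
    h ((k : ℝ) / n) * ((n.choose k : ℝ) * x ^ k * (1 - x) ^ (n - k)) := by
    ext x; exact Finset.sum_congr rfl fun k _ => by ring
  rw [e]
  exact this.trans (Finset.sum_le_sum fun k _ => lamNorm_const_mul l _ _)

lemma tendsto_bern_of_tendsto (l : ℕ → ℝ) (hl : IsLambdaSeq l) (n : ℕ) (G : ℕ → ℝ → ℝ) (g : ℝ → ℝ)
    (hG : ∀ k ≤ n, Tendsto (fun i => G i ((k : ℝ) / n)) atTop (𝓝 (g ((k : ℝ) / n)))) :
    Tendsto (fun i => lamNorm l (fun x => bern n (G i) x - bern n g x)) atTop (𝓝 0) := by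
  refine tendsto_of_tendsto_of_tendsto_of_le_of_le tendsto_const_nhds (h := fun i =>
    ∑ k ∈ Finset.range (n + 1), ENNReal.ofReal |G i ((k : ℝ) / n) - g ((k : ℝ) / n)| *
      lamNorm l (fun x => (n.choose k : ℝ) * x ^ k * (1 - x) ^ (n - k))) ?_
    (fun _ => bot_le) (fun i => ?_)
  · rw [show (0 : ℝ≥0∞) = ∑ k ∈ Finset.range (n + 1), 0 by simp]
    refine tendsto_finsetSum _ fun k hk => ?_
    have h1 : Tendsto (fun i => ENNReal.ofReal |G i ((k : ℝ) / n) - g ((k : ℝ) / n)|) atTop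
        (𝓝 0) := by
      rw [← ENNReal.ofReal_zero]
      refine ENNReal.tendsto_ofReal ?_
      have := ((hG k (by simpa [Nat.lt_succ_iff] using hk)).sub_const (g ((k : ℝ) / n))).abs
      simpa using this
    have := ENNReal.Tendsto.mul_const (b := lamNorm l
      (fun x => (n.choose k : ℝ) * x ^ k * (1 - x) ^ (n - k))) h1
      (Or.inr (lamNorm_poly l hl _ k (n - k)).ne)
    simpa using this
  · simp only [bern_sub]
    exact lamNorm_bern_fin l hl n (fun y => G i y - g y)

end BernAux
namespace BernAux

lemma exists_shift (N m : ℕ) (β : Equiv.Perm (Fin N)) :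
    ∃ γ : Equiv.Perm (Fin N), ∀ j, m ≤ (β j : ℕ) → (γ j : ℕ) + m = β j := by
  by_cases h : m < N
  · have : NeZero N := ⟨by omega⟩
    refine ⟨β.trans (Equiv.subRight (⟨m, h⟩ : Fin N)), fun j hj => ?_⟩
    have : ((β j - ⟨m, h⟩ : Fin N) : ℕ) = (β j : ℕ) - m :=
      Fin.sub_val_of_le (a := β j) (b := ⟨m, h⟩) hj
    simp only [Equiv.trans_apply, Equiv.subRight_apply, this]
    omega
  · exact ⟨β, fun j hj => by have := (β j).2; omega⟩

lemma lamVar_tail (l : ℕ → ℝ) (hl : IsLambdaSeq l) (g : ℝ → ℝ) (M : ℝ)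
    (hM : ∀ x ∈ Set.Icc (0:ℝ) 1, |g x| ≤ M) (m : ℕ) :
    lamVar l g ≤ m * ENNReal.ofReal (2 * M / l 0) + lamVar (fun n => l (n + m)) g := by
  refine lamVar_le _ _ _ fun N x hx hI β => ?_
  obtain ⟨γ, hγ⟩ := exists_shift N m β
  have hM0 : 0 ≤ M := (abs_nonneg _).trans (hM 0 (by simp))
  calc ∑ j : Fin N, ENNReal.ofReal (|g (x j.succ) - g (x j.castSucc)| / l (β j))
      ≤ ∑ j : Fin N, ((if (β j : ℕ) < m then ENNReal.ofReal (2 * M / l 0) else 0) +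
          ENNReal.ofReal (|g (x j.succ) - g (x j.castSucc)| / l (γ j + m))) := by
        refine Finset.sum_le_sum fun j _ => ?_
        by_cases h : (β j : ℕ) < m
        · rw [if_pos h]
          refine le_trans ?_ le_self_add
          refine ENNReal.ofReal_le_ofReal (div_le_div₀ (by positivity) ?_ (hl.2.1 0)
            (hl.1 (Nat.zero_le _)))
          have h1 := hM _ (hI j.succ)
          have h2 := hM _ (hI j.castSucc)
          have := abs_sub (g (x j.succ)) (g (x j.castSucc))
          linarith
        · rw [if_neg h, zero_add, hγ j (not_lt.1 h)]
    _ ≤ _ := by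
        rw [Finset.sum_add_distrib]
        refine add_le_add ?_ (sum_le_lamVar (fun n => l (n + m)) g N x hx hI γ)
        rw [← Finset.sum_filter, Finset.sum_const, nsmul_eq_mul]
        gcongr
        have := Finset.card_le_card_of_injOn (s := Finset.univ.filter fun j => (β j : ℕ) < m)
          (t := Finset.range m) (fun j => (β j : ℕ))
          (fun j hj => by simpa using hj)
          (fun a _ b _ hab => β.injective (Fin.ext hab))
        simpa using this

lemma bern_uniform (f : ℝ → ℝ) (hf : ContinuousOn f (Set.Icc 0 1)) (ε : ℝ) (hε : 0 < ε) :
    ∀ᶠ n in atTop, ∀ x ∈ Set.Icc (0:ℝ) 1, |bern n f x - f x| ≤ ε := by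
  let F : C(unitInterval, ℝ) := ⟨Set.domRestrict (Set.Icc 0 1) f, hf.domRestrict⟩
  have := bernsteinApproximation_uniform F
  rw [Metric.tendsto_atTop] at this
  obtain ⟨N, hN⟩ := this ε hε
  filter_upwards [eventually_ge_atTop N] with n hn x hx
  have h1 := (ContinuousMap.dist_lt_iff hε).1 (hN n hn) ⟨x, hx⟩
  rw [Real.dist_eq, bernsteinApproximation.apply] at h1
  have e : ∑ k : Fin (n + 1), bernstein n k ⟨x, hx⟩ • F (bernstein.z k) = bern n f x := by
    rw [bern, Finset.sum_range]
    refine Finset.sum_congr rfl fun k _ => ?_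
    have hz : F (bernstein.z k) = f ((k : ℝ) / n) := rfl
    rw [hz, bernstein_apply, smul_eq_mul]
    ring
  rw [e] at h1
  exact h1.le

lemma bern_tendsto (l : ℕ → ℝ) (hl : IsLambdaSeq l) (f : ℝ → ℝ)
    (hf : ContinuousOn f (Set.Icc 0 1)) (hc : ContInLamVar l f) :
    Tendsto (fun n => lamNorm l (fun x => bern n f x - f x)) atTop (𝓝 0) := by
  rw [ENNReal.tendsto_nhds_zero]
  intro ε hε
  have hε4 : 0 < ε / 4 := ENNReal.div_pos hε.ne' (by simp)
  obtain ⟨m, hm⟩ := ((ENNReal.tendsto_nhds_zero.1 hc) (ε / 4) hε4).exists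
  -- choose the sup-norm tolerance
  obtain ⟨δ, hδ, hδm⟩ : ∃ δ : ℝ, 0 < δ ∧ m * ENNReal.ofReal (2 * δ / l 0) ≤ ε / 4 := by
    have ht : Tendsto (fun δ : ℝ => (m : ℝ≥0∞) * ENNReal.ofReal (2 * δ / l 0)) (𝓝[>] 0) (𝓝 0) := by
      have h1 : Tendsto (fun δ : ℝ => ENNReal.ofReal (2 * δ / l 0)) (𝓝 0) (𝓝 0) := by
        have : Continuous (fun δ : ℝ => ENNReal.ofReal (2 * δ / l 0)) :=
          ENNReal.continuous_ofReal.comp (by fun_prop)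
        simpa using this.tendsto 0
      have := ENNReal.Tendsto.const_mul (a := (m : ℝ≥0∞)) h1 (Or.inr (by simp))
      rw [mul_zero] at this
      exact this.mono_left nhdsWithin_le_nhds
    obtain ⟨δ, h1, h2⟩ := (((ENNReal.tendsto_nhds_zero.1 ht) (ε / 4) hε4).and
      self_mem_nhdsWithin).exists
    exact ⟨δ, h2, h1⟩
  have hpos : ∀ n, 0 < l (n + m) := fun n => hl.2.1 _
  filter_upwards [bern_uniform f hf δ hδ] with n hn
  have h1 := lamVar_tail l hl (fun x => bern n f x - f x) δ hn m
  have h2 := lamVar_le_add (fun n => l (n + m)) hpos (bern n f) f (fun x => bern n f x - f x)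
    (fun x y => by
      refine le_trans (le_of_eq ?_) (abs_sub _ _)
      congr 1; ring)
  have h3 := lamVar_bern_le (fun n => l (n + m)) hpos n f
  unfold lamNorm
  simp only [bern_zero, sub_self, abs_zero, ENNReal.ofReal_zero, add_zero]
  calc _ ≤ ε / 4 + (ε / 4 + ε / 4) :=
        h1.trans (add_le_add hδm (h2.trans (add_le_add (h3.trans hm) hm)))
    _ ≤ ε / 4 + (ε / 4 + (ε / 4 + ε / 4)) := by gcongr; exact le_self_add
    _ = 4 * (ε / 4) := by ring
    _ = ε := ENNReal.mul_div_cancel (by simp) (by simp)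

lemma forward (l : ℕ → ℝ) (hl : IsLambdaSeq l) (K : Set (ℝ → ℝ))
    (hKsub : ∀ f ∈ K,
      ContinuousOn f (Set.Icc 0 1) ∧ lamVar l f < ⊤ ∧ ContInLamVar l f)
    (hc : ∀ F : ℕ → ℝ → ℝ, (∀ k, F k ∈ K) → ∃ g ∈ K, ∃ φ : ℕ → ℕ, StrictMono φ ∧
        Tendsto (fun k => lamNorm l (fun x => F (φ k) x - g x)) atTop (𝓝 0)) :
    Tendsto (fun n => ⨆ f ∈ K, lamNorm l (fun x => bern n f x - f x)) atTop (𝓝 0) := by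
  rw [ENNReal.tendsto_nhds_zero]
  intro ε hε
  by_contra hcon
  rw [eventually_atTop] at hcon
  push Not at hcon
  have : ∀ N, ∃ n, N ≤ n ∧ ∃ f ∈ K, ε < lamNorm l (fun x => bern n f x - f x) := by
    intro N
    obtain ⟨n, hn, h⟩ := hcon N
    refine ⟨n, hn, ?_⟩
    by_contra h'
    push Not at h'
    exact absurd (iSup₂_le h') (not_le.2 h)
  choose n hn F hFK hF using this
  obtain ⟨g, hg, φ, hφ, hlim⟩ := hc F hFK
  have hgt := bern_tendsto l hl g (hKsub g hg).1 (hKsub g hg).2.2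
  have hn' : Tendsto (fun k => n (φ k)) atTop atTop :=
    tendsto_atTop_mono (fun k => hn (φ k)) hφ.tendsto_atTop
  have hsum := (hlim.add (hgt.comp hn')).add hlim
  simp only [add_zero] at hsum
  have hle : ∀ k, ε ≤ lamNorm l (fun x => F (φ k) x - g x) +
      lamNorm l (fun x => bern (n (φ k)) g x - g x) + lamNorm l (fun x => F (φ k) x - g x) := by
    intro k
    refine (hF (φ k)).le.trans ?_
    refine (lamNorm_tri l hl.2.1 _ g _).trans ?_
    rw [lamNorm_comm l g (F (φ k))]
    gcongr
    refine (lamNorm_tri l hl.2.1 _ (bern (n (φ k)) g) _).trans ?_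
    gcongr
    simp only [bern_sub]
    exact lamNorm_bern_le l hl.2.1 _ (fun y => F (φ k) y - g y)
  exact absurd (ge_of_tendsto' hsum hle) (not_le.2 hε)

lemma backward (l : ℕ → ℝ) (hl : IsLambdaSeq l) (K : Set (ℝ → ℝ))
    (hKsub : ∀ f ∈ K,
      ContinuousOn f (Set.Icc 0 1) ∧ lamVar l f < ⊤ ∧ ContInLamVar l f)
    (hKbdd : ∃ C : ℝ≥0∞, C < ⊤ ∧ ∀ f ∈ K, lamNorm l f ≤ C)
    (hKclosed : ∀ F : ℕ → ℝ → ℝ, (∀ k, F k ∈ K) → ∀ g : ℝ → ℝ, lamVar l g < ⊤ →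
      Tendsto (fun k => lamNorm l (fun x => F k x - g x)) atTop (𝓝 0) → g ∈ K)
    (hu : Tendsto (fun n => ⨆ f ∈ K, lamNorm l (fun x => bern n f x - f x)) atTop (𝓝 0))
    (F : ℕ → ℝ → ℝ) (hF : ∀ k, F k ∈ K) :
    ∃ g ∈ K, ∃ φ : ℕ → ℕ, StrictMono φ ∧
        Tendsto (fun k => lamNorm l (fun x => F (φ k) x - g x)) atTop (𝓝 0) := by
  have hpos := hl.2.1
  obtain ⟨C, hCtop, hC⟩ := hKbdd
  -- uniform sup bound
  obtain ⟨M, hM⟩ : ∃ M : ℝ, ∀ k, ∀ x ∈ Set.Icc (0:ℝ) 1, |F k x| ≤ M := by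
    refine ⟨(ENNReal.ofReal (l 0 + 1) * C).toReal, fun k x hx => ?_⟩
    refine (ENNReal.ofReal_le_iff_le_toReal (ENNReal.mul_ne_top ENNReal.ofReal_ne_top hCtop.ne)).1 ?_
    refine (abs_le_lamNorm l hpos (F k) x hx).trans ?_
    gcongr
    exact hC _ (hF k)
  -- diagonal subsequence at rational points
  let ι := {p : ℕ × ℕ // p.1 ≤ p.2}
  let u : ℕ → ι → ℝ := fun k p => F k ((p.1.1 : ℝ) / p.1.2)
  have hpt : ∀ k n : ℕ, k ≤ n → (k : ℝ) / n ∈ Set.Icc (0:ℝ) 1 := fun k n h =>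
    ⟨by positivity, div_le_one_of_le₀ (by exact_mod_cast h) (by positivity)⟩
  have hcpt : IsCompact (Set.pi Set.univ (fun _ : ι => Set.Icc (-M) M)) :=
    isCompact_univ_pi fun _ => isCompact_Icc
  obtain ⟨a, -, φ, hφ, ha⟩ := hcpt.tendsto_subseq (x := u) (fun k p _ =>
    abs_le.1 (hM k _ (hpt _ _ p.2)))
  set G : ℕ → ℝ → ℝ := fun k => F (φ k) with hG
  have hGK : ∀ k, G k ∈ K := fun k => hF _
  let g : ℝ → ℝ := fun x => limUnder atTop (fun k => G k x)
  have hgrat : ∀ n k : ℕ, k ≤ n →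
      Tendsto (fun i => G i ((k : ℝ) / n)) atTop (𝓝 (g ((k : ℝ) / n))) := by
    intro n k hkn
    have := (tendsto_pi_nhds.1 ha) ⟨(k, n), hkn⟩
    exact tendsto_nhds_limUnder ⟨_, this⟩
  have hcauchy : ∀ ε : ℝ≥0∞, 0 < ε → ∃ N, ∀ i ≥ N, ∀ j ≥ N,
      lamNorm l (fun x => G i x - G j x) ≤ ε := by
    intro ε hε
    have hε4 : 0 < ε / 4 := ENNReal.div_pos hε.ne' (by simp)
    obtain ⟨n, hn⟩ := ((ENNReal.tendsto_nhds_zero.1 hu) (ε / 4) hε4).exists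
    have hn' : ∀ i, lamNorm l (fun x => bern n (G i) x - G i x) ≤ ε / 4 := fun i =>
      (le_iSup₂ (f := fun f (_ : f ∈ K) => lamNorm l (fun x => bern n f x - f x)) (G i)
        (hGK i)).trans hn
    have hB := tendsto_bern_of_tendsto l hl n G g (hgrat n)
    obtain ⟨N, hN⟩ := eventually_atTop.1 ((ENNReal.tendsto_nhds_zero.1 hB) (ε / 4) hε4)
    have step : ∀ i ≥ N, lamNorm l (fun x => G i x - bern n g x) ≤ ε / 4 + ε / 4 := by
      intro i hi
      refine (lamNorm_tri l hpos _ (bern n (G i)) _).trans ?_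
      rw [lamNorm_comm l (G i)]
      exact add_le_add (hn' i) (hN i hi)
    refine ⟨N, fun i hi j hj => ?_⟩
    calc _ ≤ (ε / 4 + ε / 4) + (ε / 4 + ε / 4) := by
          refine (lamNorm_tri l hpos _ (bern n g) _).trans ?_
          rw [lamNorm_comm l (bern n g)]
          exact add_le_add (step i hi) (step j hj)
      _ = 4 * (ε / 4) := by ring
      _ = ε := ENNReal.mul_div_cancel (by simp) (by simp)
  have hglim : ∀ x ∈ Set.Icc (0:ℝ) 1, Tendsto (fun i => G i x) atTop (𝓝 (g x)) := by
    intro x hx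
    refine tendsto_nhds_limUnder (cauchySeq_tendsto_of_complete ?_)
    rw [Metric.cauchySeq_iff]
    intro δ hδ
    have hl1 : 0 < l 0 + 1 := by have := hpos 0; linarith
    obtain ⟨N, hN⟩ := hcauchy (ENNReal.ofReal (δ / 2 / (l 0 + 1)))
      (ENNReal.ofReal_pos.2 (by positivity))
    refine ⟨N, fun i hi j hj => ?_⟩
    have h1 := (abs_le_lamNorm l hpos (fun x => G i x - G j x) x hx).trans
      (mul_le_mul_right (hN i hi j hj) _)
    rw [← ENNReal.ofReal_mul hl1.le, mul_div_cancel₀ _ hl1.ne',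
      ENNReal.ofReal_le_ofReal_iff (by positivity)] at h1
    rw [Real.dist_eq]
    linarith
  have hconv : ∀ ε : ℝ≥0∞, 0 < ε → ∃ N, ∀ i ≥ N, lamNorm l (fun x => G i x - g x) ≤ ε := by
    intro ε hε
    obtain ⟨N, hN⟩ := hcauchy (ε / 2) (ENNReal.half_pos hε.ne')
    refine ⟨N, fun i hi => ?_⟩
    have hlim : ∀ x ∈ Set.Icc (0:ℝ) 1,
        Tendsto (fun j => G i x - G j x) atTop (𝓝 (G i x - g x)) := fun x hx =>
      (hglim x hx).const_sub (G i x)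
    have h1 : lamVar l (fun x => G i x - g x) ≤ ε / 2 := by
      refine lamVar_lsc l (fun j x => G i x - G j x) _ _ hlim ?_
      filter_upwards [eventually_ge_atTop N] with j hj
      exact le_trans le_self_add (hN i hi j hj)
    have h2 : ENNReal.ofReal |G i 0 - g 0| ≤ ε / 2 := by
      refine le_of_tendsto (ENNReal.tendsto_ofReal (hlim 0 (by simp)).abs) ?_
      filter_upwards [eventually_ge_atTop N] with j hj
      exact le_trans le_add_self (hN i hi j hj)
    calc _ ≤ ε / 2 + ε / 2 := add_le_add h1 h2
      _ = ε := ENNReal.add_halves ε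
  have htend : Tendsto (fun k => lamNorm l (fun x => G k x - g x)) atTop (𝓝 0) := by
    rw [ENNReal.tendsto_nhds_zero]
    intro ε hε
    obtain ⟨N, hN⟩ := hconv ε hε
    exact eventually_atTop.2 ⟨N, hN⟩
  refine ⟨g, hKclosed G hGK g ?_ htend, φ, hφ, htend⟩
  obtain ⟨N, hN⟩ := hconv 1 one_pos
  have h1 := lamVar_le_add l hpos (G N) (fun x => G N x - g x) g (fun x y => by
    refine le_trans (le_of_eq ?_) (abs_sub _ _)
    congr 1; ring)
  refine lt_of_le_of_lt h1 (ENNReal.add_lt_top.2 ⟨(hKsub _ (hGK N)).2.1, ?_⟩)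
  exact lt_of_le_of_lt (le_trans le_self_add (hN N le_rfl)) ENNReal.one_lt_top

end BernAux

/-- If `Λ` is a proper Λ-sequence and `K ⊆ CΛBV_c` is bounded and closed
under `‖·‖_Λ`-convergence, then `K` is (sequentially) compact in the `‖·‖_Λ` norm iff
`‖B_n f - f‖_Λ → 0` uniformly in `f ∈ K`, i.e. `sup_{f ∈ K} ‖B_n f - f‖_Λ → 0`. -/
theorem compact_iff_bernstein_uniform (l : ℕ → ℝ) (hl : IsProperLambdaSeq l)
    (K : Set (ℝ → ℝ))
    (hKsub : ∀ f ∈ K,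
      ContinuousOn f (Set.Icc 0 1) ∧ lamVar l f < ⊤ ∧ ContInLamVar l f)
    (hKbdd : ∃ C : ℝ≥0∞, C < ⊤ ∧ ∀ f ∈ K, lamNorm l f ≤ C)
    (hKclosed : ∀ F : ℕ → ℝ → ℝ, (∀ k, F k ∈ K) → ∀ g : ℝ → ℝ, lamVar l g < ⊤ →
      Tendsto (fun k => lamNorm l (fun x => F k x - g x)) atTop (𝓝 0) → g ∈ K) :
    (∀ F : ℕ → ℝ → ℝ, (∀ k, F k ∈ K) → ∃ g ∈ K, ∃ φ : ℕ → ℕ, StrictMono φ ∧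
        Tendsto (fun k => lamNorm l (fun x => F (φ k) x - g x)) atTop (𝓝 0)) ↔
      Tendsto (fun n => ⨆ f ∈ K, lamNorm l (fun x => bern n f x - f x)) atTop (𝓝 0) := by
  exact ⟨BernAux.forward l hl.1 K hKsub, fun hu F hF =>
    BernAux.backward l hl.1 K hKsub hKbdd hKclosed hu F hF⟩
end
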